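/- Assume the family Ψ_n satisfies property (P1) (the exchange relations). Then for each n ≥ 2, the scalar products Z_n(x₁,…,x_n) and Z̄_n^±(x₁,…,x_n) are symmetric functions of x₁,…,x_n: they are invariant under every permutation of x₁,…,x_n. -/

import Mathlib

noncomputable section

open Complex
open scoped BigOperators

/-- Jacobi theta function `ϑ₁(z|τ)` with nome `p = e^{iπτ}` (Whittaker–Watson convention). -/
def th1 (z τ : ℂ) : ℂ :=
  -Complex.I * ∑' n : ℤ, (-1 : ℂ) ^ n *
    Complex.exp ((Real.pi : ℂ) * Complex.I * τ * ((n : ℂ) + 1/2) ^ 2 + (2 * (n : ℂ) + 1) * Complex.I * z)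

/-- Jacobi theta function `ϑ₂(z|τ)`. -/
def th2 (z τ : ℂ) : ℂ :=
  ∑' n : ℤ,
    Complex.exp ((Real.pi : ℂ) * Complex.I * τ * ((n : ℂ) + 1/2) ^ 2 + (2 * (n : ℂ) + 1) * Complex.I * z)

/-- Jacobi theta function `ϑ₃(z|τ)`. -/
def th3 (z τ : ℂ) : ℂ :=
  ∑' n : ℤ, Complex.exp ((Real.pi : ℂ) * Complex.I * τ * (n : ℂ) ^ 2 + 2 * (n : ℂ) * Complex.I * z)

/-- Jacobi theta function `ϑ₄(z|τ)`. -/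
def th4 (z τ : ℂ) : ℂ :=
  ∑' n : ℤ, (-1 : ℂ) ^ n *
    Complex.exp ((Real.pi : ℂ) * Complex.I * τ * (n : ℂ) ^ 2 + 2 * (n : ℂ) * Complex.I * z)

/-- The crossing parameter `η = π/3`. -/
def ηc : ℂ := (Real.pi : ℂ) / 3

/-- The elliptic nome `p = e^{iπτ}`. -/
def pnome (τ : ℂ) : ℂ := Complex.exp ((Real.pi : ℂ) * Complex.I * τ)

/-- `ζ = (ϑ₁(η,p²)/ϑ₄(η,p²))²`. -/
def zet (τ : ℂ) : ℂ := (th1 ηc (2 * τ) / th4 ηc (2 * τ)) ^ 2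

/-- The nome `p` is real with `0 < p < 1`. -/
def preal (τ : ℂ) : Prop := (pnome τ).im = 0 ∧ 0 < (pnome τ).re ∧ (pnome τ).re < 1

/-- A tuple given by a list of prescribed entries, padded by zeros. -/
def padded {n : ℕ} (l : List ℂ) : Fin n → ℂ := fun j => l.getD (j : ℕ) 0

/-- Extension of a tuple by a list of prescribed further entries (padded by zeros). -/
def extL {m n : ℕ} (w : Fin m → ℂ) (l : List ℂ) : Fin n → ℂ :=
  fun j => if h : (j : ℕ) < m then w ⟨j, h⟩ else l.getD ((j : ℕ) - m) 0

/-- First `k` entries of a `2k`-tuple. -/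
def firstHalf {k : ℕ} (x : Fin (2 * k) → ℂ) : Fin k → ℂ :=
  fun i => x ⟨(i : ℕ), by have := i.2; omega⟩

/-- Last `k` entries of a `2k`-tuple. -/
def secondHalf {k : ℕ} (x : Fin (2 * k) → ℂ) : Fin k → ℂ :=
  fun i => x ⟨k + (i : ℕ), by have := i.2; omega⟩

/-- `𝕙(x,y) = ϑ₁(x−y+η)ϑ₁(x−y−η)ϑ₁(x+y+η)ϑ₁(x+y−η)`. -/
def hh (τ x y : ℂ) : ℂ :=
  th1 (x - y + ηc) τ * th1 (x - y - ηc) τ * th1 (x + y + ηc) τ * th1 (x + y - ηc) τ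

/-- `𝔻(x₁,…,x_k) = ∏_{i<j} ϑ₁(x_j−x_i)ϑ₁(x_j+x_i)`. -/
def vdTheta (τ : ℂ) {k : ℕ} (y : Fin k → ℂ) : ℂ :=
  ∏ i : Fin k, ∏ j : Fin k, if i < j then th1 (y j - y i) τ * th1 (y j + y i) τ else 1

/-- The elliptic Tsuchiya determinant `ℍ_{2k}(x₁,…,x_k; x_{k+1},…,x_{2k})`. -/
def tsuchiya (τ : ℂ) (k : ℕ) (x : Fin (2 * k) → ℂ) : ℂ :=
  (∏ i : Fin k, ∏ j : Fin k, hh τ (firstHalf x i) (secondHalf x j))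
    / (vdTheta τ (firstHalf x) * vdTheta τ (secondHalf x))
    * Matrix.det (Matrix.of fun i j : Fin k => (hh τ (firstHalf x i) (secondHalf x j))⁻¹)

/-- The expression defining the elliptic Tsuchiya determinant is well defined:
the Vandermonde-type denominators and the entries `𝕙(x_i,x_{j+k})` are nonzero. -/
def tsuDefined (τ : ℂ) (k : ℕ) (x : Fin (2 * k) → ℂ) : Prop :=
  (∀ i j : Fin k, i ≠ j →
    th1 (firstHalf x j - firstHalf x i) τ ≠ 0 ∧ th1 (firstHalf x j + firstHalf x i) τ ≠ 0) ∧
  (∀ i j : Fin k, i ≠ j →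
    th1 (secondHalf x j - secondHalf x i) τ ≠ 0 ∧ th1 (secondHalf x j + secondHalf x i) τ ≠ 0) ∧
  (∀ i j : Fin k, hh τ (firstHalf x i) (secondHalf x j) ≠ 0)

/-- `h(w,w') = 1 − (3+ζ²)ww' + (1−ζ²)ww'(w+w')`. -/
def hpol (ζ w w' : ℂ) : ℂ := 1 - (3 + ζ ^ 2) * w * w' + (1 - ζ ^ 2) * w * w' * (w + w')

/-- Vandermonde product `Δ(w₁,…,w_k) = ∏_{i<j}(w_j − w_i)`. -/
def vdm {k : ℕ} (y : Fin k → ℂ) : ℂ :=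
  ∏ i : Fin k, ∏ j : Fin k, if i < j then y j - y i else 1

/-- The determinant-ratio expression defining the polynomial `H_{2k}`. -/
def Hratio (ζ : ℂ) (k : ℕ) (w : Fin (2 * k) → ℂ) : ℂ :=
  (∏ i : Fin k, ∏ j : Fin k, hpol ζ (firstHalf w i) (secondHalf w j))
    / (vdm (firstHalf w) * vdm (secondHalf w))
    * Matrix.det (Matrix.of fun i j : Fin k => (hpol ζ (firstHalf w i) (secondHalf w j))⁻¹)

/-- The expression `Hratio` is well defined at `w`. -/
def HratioDefined (ζ : ℂ) (k : ℕ) (w : Fin (2 * k) → ℂ) : Prop :=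
  (∀ i j : Fin k, i ≠ j → firstHalf w i ≠ firstHalf w j) ∧
  (∀ i j : Fin k, i ≠ j → secondHalf w i ≠ secondHalf w j) ∧
  (∀ i j : Fin k, hpol ζ (firstHalf w i) (secondHalf w j) ≠ 0)

/-- `H` is the family of Rosengren–Zinn-Justin polynomials `H_{2k}` for parameter `ζ`:
for each `k`, `H k` is a polynomial function of the `2k` variables agreeing with the
determinant-ratio formula wherever the latter is defined, and `H 0 = 1`. -/
def IsHFamily (ζ : ℂ) (H : (k : ℕ) → (Fin (2 * k) → ℂ) → ℂ) : Prop :=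
  (∀ w, H 0 w = 1) ∧
  (∀ k : ℕ, ∃ P : MvPolynomial (Fin (2 * k)) ℂ, ∀ w, H k w = MvPolynomial.eval w P) ∧
  (∀ (k : ℕ) (w : Fin (2 * k) → ℂ), HratioDefined ζ k w → H k w = Hratio ζ k w)

/-- Vertex weight `a(u)`. -/
def av (τ u : ℂ) : ℂ := th4 (2*ηc) (2*τ) * th1 (u + 2*ηc) (2*τ) * th4 u (2*τ)
/-- Vertex weight `b(u)`. -/
def bv (τ u : ℂ) : ℂ := th4 (2*ηc) (2*τ) * th4 (u + 2*ηc) (2*τ) * th1 u (2*τ)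
/-- Vertex weight `c(u)`. -/
def cv (τ u : ℂ) : ℂ := th1 (2*ηc) (2*τ) * th4 (u + 2*ηc) (2*τ) * th4 u (2*τ)
/-- Vertex weight `d(u)`. -/
def dv (τ u : ℂ) : ℂ := th1 (2*ηc) (2*τ) * th1 (u + 2*ηc) (2*τ) * th1 u (2*τ)
/-- `r(u) = a(u) + b(u)`. -/
def rv (τ u : ℂ) : ℂ := av τ u + bv τ u

/-- Entries of the `R`-matrix of the eight-vertex model, in the basis `{↑↑,↑↓,↓↑,↓↓}`
identified with `Fin 2 × Fin 2` (`↑ = 0`, `↓ = 1`). -/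
def Rent (τ u : ℂ) (p q : Fin 2 × Fin 2) : ℂ :=
  if p = q then (if p.1 = p.2 then av τ u else bv τ u)
  else if q = (p.2, p.1) then cv τ u
  else if p.1 = p.2 ∧ q.1 = q.2 then dv τ u
  else 0

/-- Entries of `Ř(u) = 𝒫 R(u)`. -/
def Rcheckent (τ u : ℂ) (p q : Fin 2 × Fin 2) : ℂ := Rent τ u (p.2, p.1) q

/-- The boundary vector `χ(x) ∈ ℂ²⊗ℂ²`. -/
def chiV (τ lam x : ℂ) : Fin 2 × Fin 2 → ℂ := fun p =>
  if p = ((0 : Fin 2), (1 : Fin 2)) then th1 (x + lam) (2*τ) * th4 (x - lam - 2*ηc) (2*τ)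
  else if p = ((1 : Fin 2), (0 : Fin 2)) then th1 (x - lam - 2*ηc) (2*τ) * th4 (x + lam) (2*τ)
  else 0

/-- The boundary vector `χ̄(x) ∈ ℂ²⊗ℂ²`. -/
def chibarV (τ lam x : ℂ) : Fin 2 × Fin 2 → ℂ := fun p =>
  if p = ((0 : Fin 2), (0 : Fin 2)) then th1 (x + lam) (2*τ) * th1 (x - lam - 2*ηc) (2*τ)
  else if p = ((1 : Fin 2), (1 : Fin 2)) then th4 (x - lam - 2*ηc) (2*τ) * th4 (x + lam) (2*τ)
  else 0

/-- A family `Ψ_n(u₁,…,u_{2n+1}) ∈ (ℂ²)^{⊗(2n+1)}`, represented by its components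
with respect to spin configurations `α : Fin (2n+1) → Fin 2` (`↑ = 0`, `↓ = 1`). -/
abbrev PsiFam := (n : ℕ) → (Fin (2 * n + 1) → ℂ) → (Fin (2 * n + 1) → Fin 2) → ℂ

/-- The action of `Ř(u)` on tensor factors `i`, `j` of `(ℂ²)^{⊗L}`. -/
def applyRc (τ u : ℂ) {L : ℕ} (i j : Fin L) (ψ : (Fin L → Fin 2) → ℂ) :
    (Fin L → Fin 2) → ℂ := fun α =>
  ∑ s : Fin 2, ∑ t : Fin 2,
    Rcheckent τ u (α i, α j) (s, t) * ψ (Function.update (Function.update α i s) j t)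

/-- Spin flip. -/
def flipS : Fin 2 → Fin 2 := fun s => if s = 0 then 1 else 0

/-- Components of the singlet `s = ↑↓ − ↓↑`. -/
def singletC : Fin 2 → Fin 2 → ℂ := fun s t =>
  if s = 0 ∧ t = 1 then 1 else if s = 1 ∧ t = 0 then -1 else 0

/-- Delete the entries at positions `i`, `i+1` from a tuple. -/
def delTwo {α : Type*} {n : ℕ} (i : ℕ) (u : Fin (2 * (n + 1) + 1) → α) : Fin (2 * n + 1) → α :=
  fun j => if _h : (j : ℕ) < i then u ⟨j, by have := j.2; omega⟩
           else u ⟨(j : ℕ) + 2, by have := j.2; omega⟩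

/-- The components of `Ψ_n` are entire functions of each `u_i`. -/
def PsiEntire (Ψ : PsiFam) : Prop :=
  ∀ (n : ℕ) (u : Fin (2*n+1) → ℂ) (i : Fin (2*n+1)) (α : Fin (2*n+1) → Fin 2),
    Differentiable ℂ fun z => Ψ n (Function.update u i z) α

/-- (P1): the exchange relations. -/
def PsiP1 (τ : ℂ) (Ψ : PsiFam) : Prop :=
  ∀ (n : ℕ) (u : Fin (2*n+1) → ℂ) (i j : Fin (2*n+1)), (j : ℕ) = (i : ℕ) + 1 →
    applyRc τ (u j - u i) i j (Ψ n u)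
      = fun α => rv τ (u j - u i) * Ψ n (fun l => u (Equiv.swap i j l)) α

/-- (P2): local spin flips. -/
def PsiP2 (τ : ℂ) (Ψ : PsiFam) : Prop :=
  ∀ (n : ℕ) (u : Fin (2*n+1) → ℂ) (i : Fin (2*n+1)) (α : Fin (2*n+1) → Fin 2),
    Ψ n u (Function.update α i (flipS (α i)))
      = (-(pnome τ)) ^ n * Complex.exp (-Complex.I * ∑ j, (u j - u i))
        * Ψ n (Function.update u i (u i + Real.pi * τ)) α

/-- (P3): quasi-periodicity of `Ψ_n` in each `u_i`. -/
def PsiP3 (τ : ℂ) (Ψ : PsiFam) : Prop :=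
  ∀ (n : ℕ) (u : Fin (2*n+1) → ℂ) (i : Fin (2*n+1)),
    (Ψ n (Function.update u i (u i + Real.pi))
      = fun α => (∏ j ∈ Finset.univ.erase i, (if α j = 0 then (1:ℂ) else -1)) * Ψ n u α) ∧
    (Ψ n (Function.update u i (u i + 2 * Real.pi * τ))
      = fun α => (pnome τ ^ (4*n))⁻¹ *
          Complex.exp (-2 * Complex.I * ∑ j, (u i - u j)) * Ψ n u α)

/-- (P4): the wheel condition. -/
def PsiP4 (Ψ : PsiFam) : Prop :=
  ∀ (n : ℕ) (u : Fin (2*n+1) → ℂ),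
    (∃ i j k : Fin (2*n+1), i < j ∧ j < k ∧ u j = u i + 2*ηc ∧ u k = u i + 4*ηc) →
    Ψ n u = 0

/-- (P5): the reduction relations. -/
def PsiP5 (τ : ℂ) (Ψ : PsiFam) : Prop :=
  ∀ (n : ℕ) (u : Fin (2*(n+1)+1) → ℂ) (i : ℕ) (hi : i + 1 < 2*(n+1)+1),
    u ⟨i+1, hi⟩ = u ⟨i, by omega⟩ + 2*ηc →
    Ψ (n+1) u = fun α =>
      (∏ j ∈ (Finset.univ.erase (⟨i, by omega⟩ : Fin (2*(n+1)+1))).erase ⟨i+1, hi⟩,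
          th1 (u ⟨i, by omega⟩ - u j - 2*ηc) τ)
        * singletC (α ⟨i, by omega⟩) (α ⟨i+1, hi⟩)
        * Ψ n (delTwo i u) (delTwo i α)

/-- (P6): `Ψ₀ = ↑ + ↓`. -/
def PsiP6 (Ψ : PsiFam) : Prop := ∀ u α, Ψ 0 u α = 1

/-- The inhomogeneity parameters `(x₁,−x₁,…,x_n,−x_n,0)`. -/
def interleave {n : ℕ} (x : Fin n → ℂ) : Fin (2*n+1) → ℂ := fun j =>
  if h : (j : ℕ) < 2*n then
    (if (j : ℕ) % 2 = 0 then x ⟨(j:ℕ)/2, by omega⟩ else -x ⟨(j:ℕ)/2, by omega⟩)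
  else 0

/-- Components of `χ(x)`. -/
def chiC (τ lam x : ℂ) (s t : Fin 2) : ℂ :=
  if s = 0 ∧ t = 1 then th1 (x + lam) (2*τ) * th4 (x - lam - 2*ηc) (2*τ)
  else if s = 1 ∧ t = 0 then th1 (x - lam - 2*ηc) (2*τ) * th4 (x + lam) (2*τ)
  else 0

/-- Components of `χ̄(x)`. -/
def chibarC (τ lam x : ℂ) (s t : Fin 2) : ℂ :=
  if s = 0 ∧ t = 0 then th1 (x + lam) (2*τ) * th1 (x - lam - 2*ηc) (2*τ)
  else if s = 1 ∧ t = 1 then th4 (x - lam - 2*ηc) (2*τ) * th4 (x + lam) (2*τ)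
  else 0

/-- The scalar product `Z_n(x₁,…,x_n) = ⟨ξ_n(x₁,…,x_n), Ψ_n(x₁,−x₁,…,x_n,−x_n,0)⟩`. -/
def Zfun (τ lam : ℂ) (Ψ : PsiFam) (n : ℕ) (x : Fin n → ℂ) : ℂ :=
  ∑ α : Fin (2*n+1) → Fin 2,
    (∏ m : Fin n, chiC τ lam (x m)
        (α ⟨2*(m:ℕ), by have := m.2; omega⟩) (α ⟨2*(m:ℕ)+1, by have := m.2; omega⟩))
      * (if α ⟨2*n, by omega⟩ = 0 then (1:ℂ) else 0)
      * Ψ n (interleave x) α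

/-- The scalar product `Z̄_n^±(x₁,…,x_n)`, with `ε = ±1`. -/
def Zbarfun (τ lam ε : ℂ) (Ψ : PsiFam) (n : ℕ) (x : Fin n → ℂ) : ℂ :=
  ∑ α : Fin (2*n+1) → Fin 2,
    (∏ m : Fin n, chibarC τ lam (x m)
        (α ⟨2*(m:ℕ), by have := m.2; omega⟩) (α ⟨2*(m:ℕ)+1, by have := m.2; omega⟩))
      * (if α ⟨2*n, by omega⟩ = 0 then (1:ℂ) else ε)
      * Ψ n (interleave x) α

/-- The normalisation constant `𝒩_n`. -/
def Ncoef (τ : ℂ) (n : ℕ) : ℂ :=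
  (-1 : ℂ) ^ ((n+1)/2) * (th1 ηc τ ^ (n^2))⁻¹ * (th4 0 (2*τ) / th4 ηc (2*τ)) ^ (n*(n+1)/2)

/-- The vector `ψ_n = 𝒩_n Ψ_n(0,…,0)`. -/
def psiH (τ : ℂ) (Ψ : PsiFam) (n : ℕ) (α : Fin (2*n+1) → Fin 2) : ℂ :=
  Ncoef τ n * Ψ n (fun _ => 0) α

/-- The scalar product `S_n(μ) = ((⟨↑↓| + μ⟨↓↑|)^{⊗n} ⊗ ⟨↑|) ψ_n`. -/
def Sfun (τ : ℂ) (Ψ : PsiFam) (n : ℕ) (μ : ℂ) : ℂ :=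
  ∑ α : Fin (2*n+1) → Fin 2,
    (∏ m : Fin n,
      (if α ⟨2*(m:ℕ), by have := m.2; omega⟩ = 0 ∧ α ⟨2*(m:ℕ)+1, by have := m.2; omega⟩ = 1
        then (1:ℂ)
       else if α ⟨2*(m:ℕ), by have := m.2; omega⟩ = 1 ∧ α ⟨2*(m:ℕ)+1, by have := m.2; omega⟩ = 0
        then μ
       else 0))
      * (if α ⟨2*n, by omega⟩ = 0 then (1:ℂ) else 0) * psiH τ Ψ n α

/-- The scalar product `S̄_n^±(ν) = ((⟨↑↑| + ν⟨↓↓|)^{⊗n} ⊗ (⟨↑| ± ⟨↓|)) ψ_n`, with `ε = ±1`. -/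
def Sbarfun (τ ε : ℂ) (Ψ : PsiFam) (n : ℕ) (ν : ℂ) : ℂ :=
  ∑ α : Fin (2*n+1) → Fin 2,
    (∏ m : Fin n,
      (if α ⟨2*(m:ℕ), by have := m.2; omega⟩ = 0 ∧ α ⟨2*(m:ℕ)+1, by have := m.2; omega⟩ = 0
        then (1:ℂ)
       else if α ⟨2*(m:ℕ), by have := m.2; omega⟩ = 1 ∧ α ⟨2*(m:ℕ)+1, by have := m.2; omega⟩ = 1
        then ν
       else 0))
      * (if α ⟨2*n, by omega⟩ = 0 then (1:ℂ) else ε) * psiH τ Ψ n α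

/-- The alternating spin configuration `↑↓↑↓⋯↑`. -/
def altConf {L : ℕ} : Fin L → Fin 2 := fun j => if (j : ℕ) % 2 = 0 then 0 else 1

/-- The fully polarised spin configuration `↓⋯↓`. -/
def downConf {L : ℕ} : Fin L → Fin 2 := fun _ => 1

/-- The spin configuration `↑⋯↑↓` with a single `↓` at the last site. -/
def lastDownConf {n : ℕ} : Fin (2*n+1) → Fin 2 := fun j => if (j : ℕ) = 2*n then 1 else 0

/-- `J₂ = −1/2`. -/
def J2c : ℂ := -(1/2)
/-- `J₃ = 1/(1+ζ)`. -/
def J3c (ζ : ℂ) : ℂ := 1/(1+ζ)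
/-- `J₄ = 1/(1−ζ)`. -/
def J4c (ζ : ℂ) : ℂ := 1/(1-ζ)
/-- `μ̄ = (μ−1)²/((ζ²−1)μ)`. -/
def mubar (ζ μ : ℂ) : ℂ := (μ - 1)^2 / ((ζ^2 - 1)*μ)
/-- `ν̄ = (ν−ζ)(νζ−1)/((ζ²−1)ν)`. -/
def nubar (ζ ν : ℂ) : ℂ := (ν - ζ)*(ν*ζ - 1) / ((ζ^2 - 1)*ν)

/-- The elliptic function `w(x)`. -/
def wfun (τ x : ℂ) : ℂ :=
  th4 ηc (2*τ) / th4 0 (2*τ) * th1 x τ ^ 2 / (th1 (x - ηc) τ * th1 (x + ηc) τ)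

/-- `β₂ = η + π/2`. -/
def β2c : ℂ := ηc + (Real.pi : ℂ)/2
/-- `β₃ = η + π/2 + πτ/2`. -/
def β3c (τ : ℂ) : ℂ := ηc + (Real.pi : ℂ)/2 + (Real.pi : ℂ)*τ/2
/-- `β₄ = η + πτ/2`. -/
def β4c (τ : ℂ) : ℂ := ηc + (Real.pi : ℂ)*τ/2

/-- `f` is an (even) theta function of degree `m`, nome `p = e^{iπτ}` and norm `0`
with respect to each of its variables. -/
def ThetaLike (τ : ℂ) (m : ℕ) {n : ℕ} (X : (Fin n → ℂ) → ℂ) : Prop :=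
  ∀ (x : Fin n → ℂ) (i : Fin n),
    Differentiable ℂ (fun z => X (Function.update x i z)) ∧
    (∀ z, X (Function.update x i (z + Real.pi)) = X (Function.update x i z)) ∧
    (∀ z, X (Function.update x i (z + Real.pi * τ))
        = ((-(pnome τ)) ^ m)⁻¹ * Complex.exp (-2 * Complex.I * ((m : ℂ) * z))
            * X (Function.update x i z)) ∧
    (∀ z, X (Function.update x i (-z)) = X (Function.update x i z))

/-! The covectors `χ(x) ⊗ χ(y)` satisfy a reflection-type relation: acting with
`Ř₁₂(-x - y) Ř₀₁(y - x)` on `χ(y) ⊗ χ(x)` or with `Ř₁₂(-x - y) Ř₂₃(y - x)` on `χ(x) ⊗ χ(y)` gives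
the same covector. Pairing it with `Ψ(…, x, y, -y, -x, …)` and using (P1) on both sides yields the
symmetry in two neighbouring variables, multiplied by `r(y - x) r(-x - y)`.

The factor `r(u)` is a nonzero multiple of `ϑ₁(u + η, p)`, so its zeros are simple, and as `2η` is
not a zero of `ϑ₁`, `r(u)` and `r(-u)` never vanish together. Exchanging the roles of `x` and `y`
one may thus assume `r(y - x) ≠ 0`. At a zero of `r(-x - y)`, replace `x` by a variable `t` and
divide by the simple zero: the quotient of the right-hand side contains the factor
`Ψ(…, t, y, -y, -x, …) - Ψ(…, x, y, -y, -t, …)`, which tends to zero as `t → x`.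
-/

section ThetaFunctions

/-- The theta function `∑ₙ exp (πiτ(n+a)² + 2i(n+a)z)` with characteristic `a`. The four Jacobi
theta functions are instances of it, so that each of their properties is proved once. -/
def thetaChar (a z τ : ℂ) : ℂ :=
  ∑' n : ℤ, exp (Real.pi * I * τ * (n + a) ^ 2 + 2 * (n + a) * I * z)

variable {τ : ℂ} (a b x y z : ℂ)

lemma thetaChar_term_eq (n : ℤ) :
    exp (Real.pi * I * τ * (n + a) ^ 2 + 2 * (n + a) * I * z) =
      exp (Real.pi * I * τ * a ^ 2 + 2 * a * I * z) *
        jacobiTheta₂_term n (z / Real.pi + a * τ) τ := by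
  have hπ : (Real.pi : ℂ) ≠ 0 := ofReal_ne_zero.mpr Real.pi_ne_zero
  rw [jacobiTheta₂_term, ← exp_add]
  congr 1
  field_simp
  ring

lemma thetaChar_eq_jacobiTheta₂ :
    thetaChar a z τ = exp (Real.pi * I * τ * a ^ 2 + 2 * a * I * z) *
      jacobiTheta₂ (z / Real.pi + a * τ) τ := by
  simp only [thetaChar, thetaChar_term_eq, tsum_mul_left, jacobiTheta₂]

lemma hasSum_thetaChar (hτ : 0 < τ.im) :
    HasSum (fun n : ℤ => exp (Real.pi * I * τ * (n + a) ^ 2 + 2 * (n + a) * I * z))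
      (thetaChar a z τ) := by
  simp only [thetaChar_term_eq, thetaChar_eq_jacobiTheta₂]
  exact (hasSum_jacobiTheta₂_term _ hτ).mul_left _

lemma differentiable_thetaChar (hτ : 0 < τ.im) : Differentiable ℂ fun z => thetaChar a z τ := by
  simp only [thetaChar_eq_jacobiTheta₂]
  have hJ : Differentiable ℂ fun z => jacobiTheta₂ z τ :=
    fun z => differentiableAt_jacobiTheta₂_fst z hτ
  fun_prop

lemma thetaChar_add_one : thetaChar (a + 1) z τ = thetaChar a z τ := by
  rw [thetaChar, thetaChar, ← (Equiv.addRight (1 : ℤ)).tsum_eq fun n : ℤ =>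
    exp (Real.pi * I * τ * (n + a) ^ 2 + 2 * (n + a) * I * z)]
  refine tsum_congr fun n => ?_
  rw [Equiv.coe_addRight, Int.cast_add, Int.cast_one, add_right_comm, add_assoc (n : ℂ)]

lemma thetaChar_neg : thetaChar a (-z) τ = thetaChar (-a) z τ := by
  rw [thetaChar, thetaChar, ← (Equiv.neg ℤ).tsum_eq]
  refine tsum_congr fun n => ?_
  rw [Equiv.neg_apply, Int.cast_neg]
  ring_nf

lemma thetaChar_add_pi :
    thetaChar a (z + Real.pi) τ = exp (2 * a * Real.pi * I) * thetaChar a z τ := by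
  rw [thetaChar, thetaChar, ← tsum_mul_left]
  refine tsum_congr fun n => ?_
  rw [← exp_add, exp_eq_exp_iff_exists_int]
  exact ⟨n, by ring⟩

lemma thetaChar_add_pi_mul :
    thetaChar a (z + Real.pi * τ * b) τ =
      exp (-(Real.pi * I * τ * b ^ 2 + 2 * b * I * z)) * thetaChar (a + b) z τ := by
  rw [thetaChar, thetaChar, ← tsum_mul_left]
  refine tsum_congr fun n => ?_
  rw [← exp_add]
  ring_nf

lemma thetaChar_add_pi_mul_tau :
    thetaChar a (z + Real.pi * τ) τ = exp (-(Real.pi * I * τ + 2 * I * z)) * thetaChar a z τ := by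
  simpa [thetaChar_add_one] using thetaChar_add_pi_mul (τ := τ) a 1 z

/-- Splits pairs `(m, n)` by the parity of `m + n`, rotating each half to the coordinates
`((m + n) / 2, (m - n) / 2)`, respectively `((m + n - 1) / 2, (m - n - 1) / 2)`. -/
def intPairParityEquiv : (ℤ × ℤ) ⊕ (ℤ × ℤ) ≃ ℤ × ℤ := Equiv.ofBijective
  (Sum.elim (fun p => (p.1 + p.2, p.1 - p.2)) (fun p => (p.1 + p.2 + 1, p.1 - p.2))) <| by
  constructor
  · rintro (⟨s, d⟩ | ⟨s, d⟩) (⟨s', d'⟩ | ⟨s', d'⟩) h <;>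
      simp only [Sum.elim_inl, Sum.elim_inr, Prod.mk.injEq, Sum.inl.injEq, Sum.inr.injEq,
        reduceCtorEq] at h ⊢ <;> omega
  · rintro ⟨m, n⟩
    rcases Int.even_or_odd' (m + n) with ⟨k, hk | hk⟩
    · exact ⟨.inl (k, k - n), by simp only [Sum.elim_inl, Prod.mk.injEq]; omega⟩
    · exact ⟨.inr (k, k - n), by simp only [Sum.elim_inr, Prod.mk.injEq]; omega⟩

lemma intPairParityEquiv_inl (p : ℤ × ℤ) :
    intPairParityEquiv (.inl p) = (p.1 + p.2, p.1 - p.2) := rfl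

lemma intPairParityEquiv_inr (p : ℤ × ℤ) :
    intPairParityEquiv (.inr p) = (p.1 + p.2 + 1, p.1 - p.2) := rfl

lemma hasSum_mul_prod {ι κ : Type*} {f : ι → ℂ} {g : κ → ℂ} {s t : ℂ} (hf : HasSum f s)
    (hg : HasSum g t) : HasSum (fun p : ι × κ => f p.1 * g p.2) (s * t) :=
  hf.mul hg (summable_mul_of_summable_norm hf.summable.norm hg.summable.norm)

lemma hasSum_thetaChar_mul (hτ : 0 < τ.im) :
    HasSum (fun p : ℤ × ℤ =>
      exp (Real.pi * I * τ * (p.1 + a) ^ 2 + 2 * (p.1 + a) * I * x) *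
        exp (Real.pi * I * τ * (p.2 + b) ^ 2 + 2 * (p.2 + b) * I * y))
      (thetaChar a x τ * thetaChar b y τ) :=
  hasSum_mul_prod (f := fun n : ℤ => exp (Real.pi * I * τ * (n + a) ^ 2 + 2 * (n + a) * I * x))
    (g := fun n : ℤ => exp (Real.pi * I * τ * (n + b) ^ 2 + 2 * (n + b) * I * y))
    (hasSum_thetaChar a x hτ) (hasSum_thetaChar b y hτ)

lemma two_mul_im_pos (hτ : 0 < τ.im) : 0 < (2 * τ).im := by
  simpa using hτ

lemma thetaChar_mul_thetaChar (hτ : 0 < τ.im) :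
    thetaChar a x τ * thetaChar b y τ =
      thetaChar ((a + b) / 2) (x + y) (2 * τ) * thetaChar ((a - b) / 2) (x - y) (2 * τ) +
      thetaChar ((a + b + 1) / 2) (x + y) (2 * τ) *
        thetaChar ((a - b + 1) / 2) (x - y) (2 * τ) := by
  have h2 := two_mul_im_pos hτ
  refine (intPairParityEquiv.hasSum_iff.mpr (hasSum_thetaChar_mul a b x y hτ)).unique
    (HasSum.sum ?_ ?_)
  · convert! hasSum_thetaChar_mul ((a + b) / 2) ((a - b) / 2) (x + y) (x - y) h2 using 2 with p
    simp only [Function.comp, intPairParityEquiv_inl, ← exp_add]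
    push_cast
    ring_nf
  · convert! hasSum_thetaChar_mul ((a + b + 1) / 2) ((a - b + 1) / 2) (x + y) (x - y) h2
      using 2 with p
    simp only [Function.comp, intPairParityEquiv_inr, ← exp_add]
    push_cast
    ring_nf

lemma exp_neg_int_mul_pi_mul_I (n : ℤ) : exp (-(n * Real.pi * I)) = (-1) ^ n := by
  rw [← exp_pi_mul_I, ← exp_int_mul, ← mul_assoc, exp_eq_exp_iff_exists_int]
  exact ⟨-n, by push_cast; ring⟩

lemma th1_eq_thetaChar : th1 z τ = thetaChar (1 / 2) (z - Real.pi / 2) τ := by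
  rw [th1, thetaChar, ← tsum_mul_left]
  refine tsum_congr fun n => ?_
  rw [← exp_neg_int_mul_pi_mul_I, ← exp_neg_pi_div_two_mul_I, ← exp_add, ← exp_add]
  ring_nf

lemma th2_eq_thetaChar : th2 z τ = thetaChar (1 / 2) z τ :=
  tsum_congr fun n => by ring_nf

lemma th3_eq_thetaChar : th3 z τ = thetaChar 0 z τ := by
  simp only [th3, thetaChar, add_zero]

lemma th4_eq_thetaChar : th4 z τ = thetaChar 0 (z - Real.pi / 2) τ := by
  refine tsum_congr fun n => ?_
  rw [← exp_neg_int_mul_pi_mul_I, ← exp_add]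
  ring_nf

lemma th2_eq_th1 : th2 z τ = th1 (z + Real.pi / 2) τ := by
  rw [th1_eq_thetaChar, th2_eq_thetaChar, add_sub_cancel_right]

lemma differentiable_th1 (hτ : 0 < τ.im) : Differentiable ℂ fun z => th1 z τ := by
  simp only [th1_eq_thetaChar]
  exact (differentiable_thetaChar _ hτ).comp (differentiable_id.sub_const _)

lemma differentiable_th3 (hτ : 0 < τ.im) : Differentiable ℂ fun z => th3 z τ := by
  simpa only [th3_eq_thetaChar] using differentiable_thetaChar 0 hτ

lemma differentiable_th4 (hτ : 0 < τ.im) : Differentiable ℂ fun z => th4 z τ := by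
  simp only [th4_eq_thetaChar]
  exact (differentiable_thetaChar _ hτ).comp (differentiable_id.sub_const _)

lemma th3_add_pi : th3 (z + Real.pi) τ = th3 z τ := by
  simp [th3_eq_thetaChar, thetaChar_add_pi]

lemma th4_add_pi : th4 (z + Real.pi) τ = th4 z τ := by
  simp [th4_eq_thetaChar, add_sub_right_comm, thetaChar_add_pi]

lemma th3_add_pi_mul_tau :
    th3 (z + Real.pi * τ) τ = exp (-(Real.pi * I * τ + 2 * I * z)) * th3 z τ := by
  simp only [th3_eq_thetaChar, thetaChar_add_pi_mul_tau]

lemma th4_add_pi_mul_tau :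
    th4 (z + Real.pi * τ) τ = -exp (-(Real.pi * I * τ + 2 * I * z)) * th4 z τ := by
  rw [th4_eq_thetaChar, th4_eq_thetaChar, add_sub_right_comm, thetaChar_add_pi_mul_tau,
    neg_eq_neg_one_mul (exp _), ← exp_pi_mul_I, ← exp_add]
  ring_nf

lemma th1_neg : th1 (-z) τ = -th1 z τ := by
  rw [th1_eq_thetaChar, th1_eq_thetaChar, ← neg_add', thetaChar_neg, ← thetaChar_add_one,
    show z + Real.pi / 2 = z - Real.pi / 2 + (Real.pi : ℂ) by ring, thetaChar_add_pi]
  norm_num [exp_pi_mul_I]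

lemma th4_neg : th4 (-z) τ = th4 z τ := by
  rw [th4_eq_thetaChar, th4_eq_thetaChar, ← neg_add', thetaChar_neg,
    show z + Real.pi / 2 = z - Real.pi / 2 + (Real.pi : ℂ) by ring, thetaChar_add_pi]
  simp

lemma th1_add_pi_mul_tau_div_two :
    th1 (z + Real.pi * τ / 2) τ =
      I * exp (-(Real.pi * I * τ / 4 + I * z)) * th4 z τ := by
  rw [th1_eq_thetaChar, th4_eq_thetaChar, mul_div_assoc, div_eq_mul_one_div τ, ← mul_assoc,
    add_sub_right_comm, thetaChar_add_pi_mul, show (1 / 2 + 1 / 2 : ℂ) = 0 + 1 by norm_num,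
    thetaChar_add_one]
  nth_rw 3 [← exp_pi_div_two_mul_I]
  rw [← exp_add]
  ring_nf

lemma th1_mul_th2 (hτ : 0 < τ.im) :
    th1 x τ * th2 y τ = th1 (x + y) (2 * τ) * th4 (x - y) (2 * τ) +
      th4 (x + y) (2 * τ) * th1 (x - y) (2 * τ) := by
  have h := thetaChar_mul_thetaChar (1 / 2) (1 / 2) (x - Real.pi / 2) y hτ
  rw [show ((1 / 2 + 1 / 2 + 1) / 2 : ℂ) = 0 + 1 by norm_num, thetaChar_add_one,
    sub_add_eq_add_sub, sub_right_comm] at h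
  norm_num at h
  simpa [th1_eq_thetaChar, th2_eq_thetaChar, th4_eq_thetaChar] using h

lemma th4_mul_th3 (hτ : 0 < τ.im) :
    th4 x τ * th3 y τ = th4 (x + y) (2 * τ) * th4 (x - y) (2 * τ) +
      th1 (x + y) (2 * τ) * th1 (x - y) (2 * τ) := by
  have h := thetaChar_mul_thetaChar 0 0 (x - Real.pi / 2) y hτ
  rw [sub_add_eq_add_sub, sub_right_comm] at h
  simpa [th1_eq_thetaChar, th3_eq_thetaChar, th4_eq_thetaChar] using h

lemma two_mul_th1_mul_th4 (hτ : 0 < τ.im) :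
    2 * (th1 (x + y) (2 * τ) * th4 (x - y) (2 * τ)) =
      th1 x τ * th2 y τ + th1 y τ * th2 x τ := by
  rw [th1_mul_th2 x y hτ, th1_mul_th2 y x hτ, ← neg_sub x y, th4_neg, th1_neg, add_comm y x]
  ring

lemma two_mul_th4_mul_th1 (hτ : 0 < τ.im) :
    2 * (th4 (x + y) (2 * τ) * th1 (x - y) (2 * τ)) =
      th1 x τ * th2 y τ - th1 y τ * th2 x τ := by
  rw [th1_mul_th2 x y hτ, th1_mul_th2 y x hτ, ← neg_sub x y, th4_neg, th1_neg, add_comm y x]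
  ring

lemma two_mul_th4_mul_th4 (hτ : 0 < τ.im) :
    2 * (th4 (x + y) (2 * τ) * th4 (x - y) (2 * τ)) =
      th4 x τ * th3 y τ + th4 y τ * th3 x τ := by
  rw [th4_mul_th3 x y hτ, th4_mul_th3 y x hτ, ← neg_sub x y, th4_neg, th1_neg, add_comm y x]
  ring

lemma two_mul_th1_mul_th1 (hτ : 0 < τ.im) :
    2 * (th1 (x + y) (2 * τ) * th1 (x - y) (2 * τ)) =
      th4 x τ * th3 y τ - th4 y τ * th3 x τ := by
  rw [th4_mul_th3 x y hτ, th4_mul_th3 y x hτ, ← neg_sub x y, th4_neg, th1_neg, add_comm y x]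
  ring

end ThetaFunctions

section EntireFunctions

open Filter Topology

variable {f g : ℂ → ℂ}

lemma eq_zero_or_eq_zero_of_differentiable_of_mul_eq_zero (hf : Differentiable ℂ f)
    (hg : Differentiable ℂ g) (h : ∀ z, f z * g z = 0) : (∀ z, f z = 0) ∨ ∀ z, g z = 0 := by
  have := AnalyticOnNhd.eq_zero_or_eq_zero_of_mul_eq_zero (U := Set.univ)
    (fun z _ => hf.analyticAt z) (fun z _ => hg.analyticAt z) (fun z _ => h z) isPreconnected_univ
  simpa using this

lemma exists_differentiable_mul_eq {F G : ℂ → ℂ} (hf : Differentiable ℂ f)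
    (hg : Differentiable ℂ g) (hF : Differentiable ℂ F) (hG : Differentiable ℂ G)
    (hfg : ∀ z, f z ≠ 0 ∨ g z ≠ 0) (h : ∀ z, F z * g z = G z * f z) :
    ∃ c : ℂ → ℂ, Differentiable ℂ c ∧ ∀ z, F z = c z * f z ∧ G z = c z * g z := by
  classical
  set c : ℂ → ℂ := fun z => if f z = 0 then G z / g z else F z / f z
  have c_eq_left {z : ℂ} (hz : f z ≠ 0) : c z = F z / f z := if_neg hz
  have c_eq_right {z : ℂ} (hz : g z ≠ 0) : c z = G z / g z := by
    by_cases hfz : f z = 0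
    · exact if_pos hfz
    · rw [c_eq_left hfz, div_eq_div_iff hfz hz, h]
  refine ⟨c, fun z => ?_, fun z => ?_⟩
  · rcases hfg z with hz | hz
    · have hev : c =ᶠ[𝓝 z] fun w => F w / f w :=
        (hf.continuous.continuousAt.eventually_ne hz).mono fun w hw => c_eq_left hw
      exact ((hF z).fun_div (hf z) hz).congr_of_eventuallyEq hev
    · have hev : c =ᶠ[𝓝 z] fun w => G w / g w :=
        (hg.continuous.continuousAt.eventually_ne hz).mono fun w hw => c_eq_right hw
      exact ((hG z).fun_div (hg z) hz).congr_of_eventuallyEq hev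
  · rcases hfg z with hz | hz
    · rw [c_eq_left hz]
      exact ⟨by field_simp, by field_simp; rw [h]⟩
    · rw [c_eq_right hz]
      exact ⟨by field_simp; rw [h], by field_simp⟩

lemma mul_eq_mul_of_wronskian_eq_zero (hf : Differentiable ℂ f) (hg : Differentiable ℂ g)
    (h : ∀ z, deriv f z * g z = f z * deriv g z) (x y : ℂ) : f x * g y = f y * g x := by
  rcases em (∀ z, g z = 0) with hg0 | hg0
  · rw [hg0, hg0, mul_zero, mul_zero]
  obtain ⟨p, hp⟩ := not_forall.mp hg0
  obtain ⟨r, hr, hball⟩ := Metric.eventually_nhds_iff_ball.mp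
    (hg.continuous.continuousAt.eventually_ne hp)
  have hquot (z : ℂ) (hz : z ∈ Metric.ball p r) : HasDerivAt (fun w => f w / g w) 0 z := by
    have := (hf z).hasDerivAt.fun_div (hg z).hasDerivAt (hball z hz)
    rwa [h, sub_self, zero_div] at this
  obtain ⟨k, hk⟩ := Metric.isOpen_ball.exists_is_const_of_deriv_eq_zero
    (convex_ball p r).isPreconnected
    (fun z hz => (hquot z hz).differentiableAt.differentiableWithinAt)
    fun z hz => (hquot z hz).deriv
  have hev : f =ᶠ[𝓝 p] fun z => k * g z := by
    filter_upwards [Metric.ball_mem_nhds p hr] with z hz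
    rw [← hk z hz, div_mul_cancel₀ _ (hball z hz)]
  have hfk : f = fun z => k * g z :=
    AnalyticOnNhd.eq_of_eventuallyEq (fun z _ => hf.analyticAt z)
      (fun z _ => (hg.const_mul k).analyticAt z) hev
  simp only [hfk]
  ring

lemma isBounded_range_of_continuous_of_norm_periodic {E : Type*} [SeminormedAddCommGroup E]
    {f : ℂ → E} (hf : Continuous f) {τ : ℂ} (hτ : 0 < τ.im)
    (h1 : ∀ z, ‖f (z + 1)‖ = ‖f z‖) (h2 : ∀ z, ‖f (z + τ)‖ = ‖f z‖) :
    Bornology.IsBounded (Set.range f) := by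
  have hcompact : IsCompact
      ((fun p : ℝ × ℝ => f (p.1 + p.2 * τ)) '' (Set.Icc 0 1 ×ˢ Set.Icc 0 1)) :=
    (isCompact_Icc.prod isCompact_Icc).image (by fun_prop)
  obtain ⟨C, hC⟩ := hcompact.isBounded.exists_norm_le
  refine isBounded_iff_forall_norm_le.mpr ⟨C, ?_⟩
  rintro _ ⟨z, rfl⟩
  set t : ℝ := z.im / τ.im
  set s : ℝ := z.re - t * τ.re
  have hz : z = s + t * τ := by
    apply Complex.ext
    · simp [s]
    · simp [t, hτ.ne']
  have hper1 (n : ℤ) (w : ℂ) : ‖f (w + n)‖ = ‖f w‖ := by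
    simpa using Function.Periodic.int_mul (f := fun z => ‖f z‖) h1 n w
  have hper2 (n : ℤ) (w : ℂ) : ‖f (w + n * τ)‖ = ‖f w‖ :=
    Function.Periodic.int_mul (f := fun z => ‖f z‖) h2 n w
  have hfract : ‖f z‖ = ‖f (Int.fract s + Int.fract t * τ)‖ := calc
    ‖f z‖ = ‖f (Int.fract s + Int.fract t * τ + ⌊s⌋ + ⌊t⌋ * τ)‖ := by
      rw [hz, Int.fract, Int.fract]
      push_cast
      ring_nf
    _ = _ := by rw [hper2, hper1]
  rw [hfract]
  exact hC _ ⟨(Int.fract s, Int.fract t), ⟨⟨Int.fract_nonneg s, (Int.fract_lt_one s).le⟩,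
    Int.fract_nonneg t, (Int.fract_lt_one t).le⟩, rfl⟩

-- The factor `exp (-2πiκz)` makes both multipliers unimodular, so that Liouville's theorem applies.
lemma exists_int_add_int_mul_eq_of_quasiperiodic (hf : Differentiable ℂ f) {τ b z₀ : ℂ}
    (hτ : 0 < τ.im) (hz₀ : f z₀ ≠ 0) (h1 : ∀ z, f (z + 1) = f z)
    (h2 : ∀ z, f (z + τ) = exp (2 * Real.pi * I * b) * f z) :
    ∃ m n : ℤ, b = m + n * τ := by
  set κ : ℝ := b.im / τ.im
  set h : ℂ → ℂ := fun z => exp (-(2 * Real.pi * I * κ * z)) * f z with hh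
  have hh1 (z : ℂ) : h (z + 1) = exp (-(2 * Real.pi * I * κ)) * h z := by
    simp only [hh, h1, ← mul_assoc, ← exp_add]
    ring_nf
  have hh2 (z : ℂ) : h (z + τ) = exp (2 * Real.pi * I * (b - κ * τ)) * h z := by
    simp only [hh, h2, ← mul_assoc, ← exp_add]
    ring_nf
  have hd : Differentiable ℂ h := by fun_prop
  have hbdd := isBounded_range_of_continuous_of_norm_periodic hd.continuous hτ
    (fun z => by rw [hh1, norm_mul, norm_exp]; simp)
    (fun z => by rw [hh2, norm_mul, norm_exp]; simp [κ, hτ.ne'])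
  have hconst (z : ℂ) : h z = h z₀ := hd.apply_eq_apply_of_bounded hbdd z z₀
  have hne : h z₀ ≠ 0 := mul_ne_zero (exp_ne_zero _) hz₀
  have e1 : exp (-(2 * Real.pi * I * κ)) = 1 := by
    rw [← mul_eq_right₀ hne, ← hh1, hconst]
  have e2 : exp (2 * Real.pi * I * (b - κ * τ)) = 1 := by
    rw [← mul_eq_right₀ hne, ← hh2, hconst]
  obtain ⟨n, hn⟩ := exp_eq_one_iff.mp e1
  obtain ⟨m, hm⟩ := exp_eq_one_iff.mp e2
  refine ⟨m, -n, mul_right_cancel₀ two_pi_I_ne_zero ?_⟩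
  push_cast
  linear_combination hm - τ * hn

end EntireFunctions

section ThetaZeros

variable {τ : ℂ}

lemma integral_exp_two_pi_mul_I_mul (n : ℤ) :
    ∫ x in (0 : ℝ)..1, exp (2 * Real.pi * I * n * x) = if n = 0 then 1 else 0 := by
  split_ifs with hn
  · simp [hn]
  · have hc : 2 * Real.pi * I * n ≠ 0 := mul_ne_zero two_pi_I_ne_zero (Int.cast_ne_zero.mpr hn)
    have h1 : exp (2 * Real.pi * I * n) = 1 := by
      rw [mul_comm, exp_int_mul_two_pi_mul_I]
    rw [integral_exp_mul_complex hc]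
    simp [h1]

-- The constant Fourier coefficient of `x ↦ jacobiTheta₂ x τ` is `1`.
lemma exists_jacobiTheta₂_ne_zero (hτ : 0 < τ.im) : ∃ z, jacobiTheta₂ z τ ≠ 0 := by
  by_contra! h0
  have hterm (n : ℤ) (x : ℝ) : jacobiTheta₂_term n x τ =
      exp (Real.pi * I * n ^ 2 * τ) * exp (2 * Real.pi * I * n * x) := by
    rw [jacobiTheta₂_term, ← exp_add, add_comm]
  have hnorm (n : ℤ) (x : ℝ) : ‖jacobiTheta₂_term n x τ‖ = ‖jacobiTheta₂_term n 0 τ‖ := by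
    simp [norm_jacobiTheta₂_term]
  have hsum : HasSum (fun n : ℤ => ∫ x in (0 : ℝ)..1, jacobiTheta₂_term n x τ)
      (∫ x in (0 : ℝ)..1, jacobiTheta₂ x τ) := by
    refine intervalIntegral.hasSum_integral_of_dominated_convergence
      (fun n _ => ‖jacobiTheta₂_term n 0 τ‖) (fun n => ?_) (fun n => ?_) ?_ ?_ ?_
    · simp only [hterm]
      exact Continuous.aestronglyMeasurable (by fun_prop)
    · exact .of_forall fun x _ => (hnorm n x).le
    · exact .of_forall fun x _ => (hasSum_jacobiTheta₂_term 0 hτ).summable.norm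
    · exact intervalIntegrable_const
    · exact .of_forall fun x _ => hasSum_jacobiTheta₂_term x hτ
  simp only [h0, hterm, intervalIntegral.integral_const_mul, integral_exp_two_pi_mul_I_mul,
    intervalIntegral.integral_zero, mul_ite, mul_one, mul_zero] at hsum
  have hzero := (hasSum_single (0 : ℤ) fun n hn => if_neg hn).unique hsum
  simp at hzero

lemma exists_th1_ne_zero (hτ : 0 < τ.im) : ∃ z, th1 z τ ≠ 0 := by
  obtain ⟨z, hz⟩ := exists_jacobiTheta₂_ne_zero hτ
  refine ⟨Real.pi * (z - τ / 2) + Real.pi / 2, ?_⟩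
  rw [th1_eq_thetaChar, add_sub_cancel_right, thetaChar_eq_jacobiTheta₂,
    mul_div_cancel_left₀ _ (ofReal_ne_zero.mpr Real.pi_ne_zero)]
  exact mul_ne_zero (exp_ne_zero _) (by convert hz using 2; ring)

lemma th3_ne_zero_or_th4_ne_zero (hτ : 0 < τ.im) (z : ℂ) : th3 z τ ≠ 0 ∨ th4 z τ ≠ 0 := by
  by_contra! h
  have hd := differentiable_th1 (two_mul_im_pos hτ)
  have hmul (x : ℂ) : th1 (x + z) (2 * τ) * th1 (x - z) (2 * τ) = 0 := by
    have := two_mul_th1_mul_th1 x z hτ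
    rw [h.1, h.2, mul_zero, zero_mul, sub_zero] at this
    simpa using this
  obtain ⟨w, hw⟩ := exists_th1_ne_zero (two_mul_im_pos hτ)
  rcases eq_zero_or_eq_zero_of_differentiable_of_mul_eq_zero
    (hd.comp (differentiable_id.add_const z)) (hd.comp (differentiable_id.sub_const z)) hmul
    with h0 | h0
  · exact hw (by simpa using h0 (w - z))
  · exact hw (by simpa using h0 (w + z))

lemma exists_translation_multiplier (hτ : 0 < τ.im) {a : ℂ} (ha : th1 a (2 * τ) = 0) :
    ∃ c : ℂ → ℂ, Differentiable ℂ c ∧ (∀ z, c z ≠ 0) ∧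
      ∀ z, th3 (z + a) τ = c z * th3 z τ ∧ th4 (z + a) τ = c z * th4 z τ := by
  have d3 := differentiable_th3 hτ
  have d4 := differentiable_th4 hτ
  obtain ⟨c, dc, hc⟩ := exists_differentiable_mul_eq d3 d4
    (d3.comp (differentiable_id.add_const a)) (d4.comp (differentiable_id.add_const a))
    (th3_ne_zero_or_th4_ne_zero hτ) fun z => by
      have := two_mul_th1_mul_th1 (z + a) z hτ
      rw [add_sub_cancel_left, ha, mul_zero, mul_zero] at this
      simp only [Function.comp_apply, id]
      linear_combination this
  simp only [Function.comp_apply, id] at hc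
  refine ⟨c, dc, fun z hz => ?_, hc⟩
  have := th3_ne_zero_or_th4_ne_zero hτ (z + a)
  simp [hc, hz] at this

lemma exists_of_th1_eq_zero (hτ : 0 < τ.im) {a : ℂ} (ha : th1 a (2 * τ) = 0) :
    ∃ m n : ℤ, a = Real.pi * (m + n * τ) := by
  have hπ : (Real.pi : ℂ) ≠ 0 := ofReal_ne_zero.mpr Real.pi_ne_zero
  obtain ⟨c, dc, hc0, hc⟩ := exists_translation_multiplier hτ ha
  have add_pi (z : ℂ) : c (z + Real.pi) = c z := by
    rcases th3_ne_zero_or_th4_ne_zero hτ z with hz | hz <;> apply mul_right_cancel₀ hz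
    · rw [← (hc z).1, ← th3_add_pi z, ← (hc _).1, add_right_comm, th3_add_pi]
    · rw [← (hc z).2, ← th4_add_pi z, ← (hc _).2, add_right_comm, th4_add_pi]
  have add_pi_mul (z : ℂ) : c (z + Real.pi * τ) = exp (-(2 * I * a)) * c z := by
    have hexp : exp (-(Real.pi * I * τ + 2 * I * (z + a))) =
        exp (-(2 * I * a)) * exp (-(Real.pi * I * τ + 2 * I * z)) := by
      rw [← exp_add]
      ring_nf
    have he := exp_ne_zero (-(Real.pi * I * τ + 2 * I * z))
    rcases th3_ne_zero_or_th4_ne_zero hτ z with hz | hz <;> apply mul_right_cancel₀ hz <;>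
      apply mul_left_cancel₀ he
    · have h := (hc (z + Real.pi * τ)).1
      rw [add_right_comm, th3_add_pi_mul_tau, th3_add_pi_mul_tau, (hc z).1, hexp] at h
      linear_combination -h
    · have h := (hc (z + Real.pi * τ)).2
      rw [add_right_comm, th4_add_pi_mul_tau, th4_add_pi_mul_tau, (hc z).2, hexp] at h
      linear_combination h
  obtain ⟨m, n, h⟩ := exists_int_add_int_mul_eq_of_quasiperiodic
    (f := fun z => c (Real.pi * z)) (b := -a / Real.pi) (z₀ := 0) (by fun_prop) hτ (hc0 _)
    (fun z => by rw [mul_add, mul_one, add_pi])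
    (fun z => by rw [mul_add, add_pi_mul]; congr 2; field_simp)
  refine ⟨-m, -n, ?_⟩
  rw [div_eq_iff hπ] at h
  push_cast
  linear_combination -h

lemma deriv_th1_ne_zero (hτ : 0 < τ.im) {a : ℂ} (ha : th1 a (2 * τ) = 0) :
    deriv (fun z => th1 z (2 * τ)) a ≠ 0 := by
  intro hd
  have d1 := differentiable_th1 (two_mul_im_pos hτ)
  have d3 := differentiable_th3 hτ
  have d4 := differentiable_th4 hτ
  -- With `y := a - x`, the product formula and its `x`-derivative vanish on the left-hand side,
  -- so both `(θ₄, θ₃)` and `(θ₄', θ₃')` at `x` are orthogonal to the same nonzero vector.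
  have wronskian (x : ℂ) : deriv (fun w => th4 w τ) x * th3 x τ =
      th4 x τ * deriv (fun w => th3 w τ) x := by
    set y := a - x
    have hxy : x + y = a := add_sub_cancel x a
    have hval := two_mul_th1_mul_th1 x y hτ
    have hplus : HasDerivAt (fun w => th1 (w + y) (2 * τ)) 0 x := by
      rw [← hd, ← hxy]
      exact (d1 (x + y)).hasDerivAt.comp_add_const x y
    have hminus : DifferentiableAt ℂ (fun w => th1 (w - y) (2 * τ)) x := by fun_prop
    have hleft := (hplus.fun_mul hminus.hasDerivAt).const_mul 2
    have hright := ((d4 x).hasDerivAt.mul_const (th3 y τ)).sub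
      ((d3 x).hasDerivAt.const_mul (th4 y τ))
    simp only [two_mul_th1_mul_th1 _ _ hτ, hxy, ha, zero_mul, add_zero, mul_zero] at hleft hval
    have hderiv := hright.unique hleft
    rcases th3_ne_zero_or_th4_ne_zero hτ y with hne | hne <;> apply mul_left_cancel₀ hne
    · linear_combination th3 x τ * hderiv + deriv (fun w => th3 w τ) x * hval
    · linear_combination th4 x τ * hderiv + deriv (fun w => th4 w τ) x * hval
  obtain ⟨w, hw⟩ := exists_th1_ne_zero (two_mul_im_pos hτ)
  have h := two_mul_th1_mul_th1 w 0 hτ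
  rw [mul_eq_mul_of_wronskian_eq_zero d4 d3 wronskian w 0, sub_self] at h
  simp [hw] at h

end ThetaZeros

section VertexWeights

variable {τ : ℂ}

lemma den_eq_one_of_ratCast_eq_add_mul (hτ : 0 < τ.im) {q : ℚ} {m n : ℤ}
    (h : (q : ℂ) = m + n * τ) : q.den = 1 := by
  have hn : n = 0 := by simpa [hτ.ne'] using congrArg im h
  have hq : q = m := by
    rw [hn, Int.cast_zero, zero_mul, add_zero] at h
    exact_mod_cast h
  rw [hq, Rat.den_intCast]

lemma exists_of_th1_pi_mul_eq_zero (hτ : 0 < τ.im) {z : ℂ} (hz : th1 (Real.pi * z) τ = 0) :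
    ∃ m n : ℤ, z = m + n * (τ / 2) := by
  have hτ2 : 0 < (τ / 2).im := by simpa using hτ
  rw [← mul_div_cancel₀ τ two_ne_zero] at hz
  obtain ⟨m, n, h⟩ := exists_of_th1_eq_zero hτ2 hz
  exact ⟨m, n, mul_left_cancel₀ (ofReal_ne_zero.mpr Real.pi_ne_zero) h⟩

lemma th4_two_mul_ηc_ne_zero (hτ : 0 < τ.im) : th4 (2 * ηc) (2 * τ) ≠ 0 := by
  intro h
  have h1 := th1_add_pi_mul_tau_div_two (τ := 2 * τ) (2 * ηc)
  rw [h, mul_zero, ηc, show (2 * (Real.pi / 3) + Real.pi * (2 * τ) / 2 : ℂ) =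
    Real.pi * (2 / 3 + τ) by ring] at h1
  obtain ⟨m, n, hmn⟩ := exists_of_th1_pi_mul_eq_zero (two_mul_im_pos hτ) h1
  have hden := den_eq_one_of_ratCast_eq_add_mul hτ (q := 2 / 3) (m := m) (n := n - 1) (by
    push_cast
    linear_combination hmn)
  norm_num at hden

lemma th2_ηc_ne_zero (hτ : 0 < τ.im) : th2 ηc τ ≠ 0 := by
  intro h
  rw [th2_eq_th1, ηc, show (Real.pi / 3 + Real.pi / 2 : ℂ) = Real.pi * (5 / 6) by ring] at h
  obtain ⟨m, n, hmn⟩ := exists_of_th1_pi_mul_eq_zero hτ h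
  have hden := den_eq_one_of_ratCast_eq_add_mul (τ := τ / 2) (by simpa using hτ) (q := 5 / 6)
    (by push_cast; exact hmn)
  norm_num at hden

lemma rv_eq_mul_th1 (hτ : 0 < τ.im) (u : ℂ) :
    rv τ u = th4 (2 * ηc) (2 * τ) * th2 ηc τ * th1 (u + ηc) τ := by
  have h := th1_mul_th2 (u + ηc) ηc hτ
  rw [add_sub_cancel_right, add_assoc, ← two_mul] at h
  rw [rv, av, bv]
  linear_combination -th4 (2 * ηc) (2 * τ) * h

lemma rv_eq_zero_iff (hτ : 0 < τ.im) {u : ℂ} : rv τ u = 0 ↔ th1 (u + ηc) τ = 0 := by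
  simp [rv_eq_mul_th1 hτ, th4_two_mul_ηc_ne_zero hτ, th2_ηc_ne_zero hτ]

lemma differentiable_rv (hτ : 0 < τ.im) : Differentiable ℂ (rv τ) := by
  have := differentiable_th1 hτ
  rw [funext (rv_eq_mul_th1 hτ)]
  fun_prop

lemma deriv_rv_ne_zero (hτ : 0 < τ.im) {u : ℂ} (hu : rv τ u = 0) : deriv (rv τ) u ≠ 0 := by
  have hτ2 : 0 < (τ / 2).im := by simpa using hτ
  have hsimple := deriv_th1_ne_zero hτ2 (a := u + ηc)
  rw [mul_div_cancel₀ τ two_ne_zero, ← rv_eq_zero_iff hτ] at hsimple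
  rw [funext (rv_eq_mul_th1 hτ), deriv_const_mul_field, deriv_comp_add_const (fun w => th1 w τ)]
  exact mul_ne_zero (mul_ne_zero (th4_two_mul_ηc_ne_zero hτ) (th2_ηc_ne_zero hτ)) (hsimple hu)

lemma rv_neg_ne_zero_of_rv_eq_zero (hτ : 0 < τ.im) {u : ℂ} (hu : rv τ u = 0) : rv τ (-u) ≠ 0 := by
  intro hu'
  rw [rv_eq_zero_iff hτ, ← mul_div_cancel₀ (_ + _) (ofReal_ne_zero.mpr Real.pi_ne_zero)] at hu hu'
  obtain ⟨m, n, h⟩ := exists_of_th1_pi_mul_eq_zero hτ hu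
  obtain ⟨m', n', h'⟩ := exists_of_th1_pi_mul_eq_zero hτ hu'
  have hden := den_eq_one_of_ratCast_eq_add_mul (τ := τ / 2) (by simpa using hτ) (q := 2 / 3)
    (m := m + m') (n := n + n') (by
      have hη : (2 / 3 : ℂ) = (u + ηc) / Real.pi + (-u + ηc) / Real.pi := by
        rw [ηc]
        field_simp
        ring
      push_cast
      rw [hη, h, h']
      ring)
  norm_num at hden

end VertexWeights

section FourSites

variable {τ : ℂ}

/-- The equivalence between quadruples and functions on `Fin 4`, used to expand sums over the spin
configurations of four sites. -/
def finFourArrowEquiv (X : Type*) : X × X × X × X ≃ (Fin 4 → X) where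
  toFun p := ![p.1, p.2.1, p.2.2.1, p.2.2.2]
  invFun f := (f 0, f 1, f 2, f 3)
  right_inv _ := (FinVec.etaExpand_eq _)

lemma sum_finFourArrow {X M : Type*} [Fintype X] [AddCommMonoid M] (g : (Fin 4 → X) → M) :
    ∑ s, g s = ∑ a, ∑ b, ∑ c, ∑ d, g ![a, b, c, d] := by
  rw [← (finFourArrowEquiv X).sum_comp]
  simp only [Fintype.sum_prod_type]
  rfl

section Update

variable {X : Type*} (a b c d s : X)

lemma update_four_zero : Function.update ![a, b, c, d] 0 s = ![s, b, c, d] :=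
  (FinVec.etaExpand_eq _).symm

lemma update_four_one : Function.update ![a, b, c, d] 1 s = ![a, s, c, d] :=
  (FinVec.etaExpand_eq _).symm

lemma update_four_two : Function.update ![a, b, c, d] 2 s = ![a, b, s, d] :=
  (FinVec.etaExpand_eq _).symm

lemma update_four_three : Function.update ![a, b, c, d] 3 s = ![a, b, c, s] :=
  (FinVec.etaExpand_eq _).symm

end Update

/-- The exchange relation for a boundary covector `χ` on four sites:
`(χ(y) ⊗ χ(x)) Ř₂₃(-x-y) Ř₁₂(y-x) = (χ(x) ⊗ χ(y)) Ř₂₃(-x-y) Ř₃₄(y-x)`. It allows the two factors of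
the boundary state to be interchanged. -/
def BoundaryExchange (τ : ℂ) (χ : ℂ → Fin 2 → Fin 2 → ℂ) : Prop :=
  ∀ (x y : ℂ) (ψ : (Fin 4 → Fin 2) → ℂ),
    ∑ s, χ y (s 0) (s 1) * χ x (s 2) (s 3) *
        applyRc τ (-x - y) 1 2 (applyRc τ (y - x) 0 1 ψ) s =
      ∑ s, χ x (s 0) (s 1) * χ y (s 2) (s 3) *
        applyRc τ (-x - y) 1 2 (applyRc τ (y - x) 2 3 ψ) s

section LocalAction

variable (τ) (u : ℂ) (ψ : (Fin 4 → Fin 2) → ℂ) (a b c d : Fin 2)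

lemma sum_Rcheckent_mul (f : Fin 2 → Fin 2 → ℂ) :
    ∑ s, ∑ t, Rcheckent τ u (a, b) (s, t) * f s t =
      if a = b then av τ u * f a a + dv τ u * f (1 - a) (1 - a)
      else cv τ u * f a b + bv τ u * f b a := by
  fin_cases a <;> fin_cases b <;> simp [Fin.sum_univ_two, Rcheckent, Rent, add_comm]

lemma applyRc_four_zero : applyRc τ u 0 1 ψ ![a, b, c, d] =
    ∑ s, ∑ t, Rcheckent τ u (a, b) (s, t) * ψ ![s, t, c, d] := by
  simp only [applyRc, update_four_zero, update_four_one]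
  rfl

lemma applyRc_four_one : applyRc τ u 1 2 ψ ![a, b, c, d] =
    ∑ s, ∑ t, Rcheckent τ u (b, c) (s, t) * ψ ![a, s, t, d] := by
  simp only [applyRc, update_four_one, update_four_two]
  rfl

lemma applyRc_four_two : applyRc τ u 2 3 ψ ![a, b, c, d] =
    ∑ s, ∑ t, Rcheckent τ u (c, d) (s, t) * ψ ![a, b, s, t] := by
  simp only [applyRc, update_four_two, update_four_three]
  rfl

end LocalAction

lemma boundaryExchange_of_antidiagonal {χ : ℂ → Fin 2 → Fin 2 → ℂ}
    (h00 : ∀ x, χ x 0 0 = 0) (h11 : ∀ x, χ x 1 1 = 0)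
    (hac : ∀ x y, av τ (-x - y) * cv τ (y - x) * (χ x 0 1 * χ y 1 0 - χ x 1 0 * χ y 0 1) +
      cv τ (-x - y) * bv τ (y - x) * (χ x 0 1 * χ y 0 1 - χ x 1 0 * χ y 1 0) = 0)
    (hda : ∀ x y, dv τ (-x - y) * av τ (y - x) * (χ x 0 1 * χ y 1 0 - χ x 1 0 * χ y 0 1) +
      bv τ (-x - y) * dv τ (y - x) * (χ x 0 1 * χ y 0 1 - χ x 1 0 * χ y 1 0) = 0) :
    BoundaryExchange τ χ := by
  intro x y ψ
  rw [sum_finFourArrow, sum_finFourArrow]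
  simp only [Fin.sum_univ_two, Matrix.cons_val, h00, h11, zero_mul, mul_zero, add_zero, zero_add]
  simp only [applyRc_four_zero, applyRc_four_one, applyRc_four_two, sum_Rcheckent_mul,
    zero_ne_one, one_ne_zero, if_true, if_false, sub_self, sub_zero]
  linear_combination (ψ ![1, 0, 0, 1] - ψ ![0, 1, 1, 0]) * hac x y +
    (ψ ![1, 1, 1, 1] - ψ ![0, 0, 0, 0]) * hda x y

lemma boundaryExchange_of_diagonal {χ : ℂ → Fin 2 → Fin 2 → ℂ}
    (h01 : ∀ x, χ x 0 1 = 0) (h10 : ∀ x, χ x 1 0 = 0)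
    (had : ∀ x y, av τ (-x - y) * dv τ (y - x) * (χ x 0 0 * χ y 0 0 - χ x 1 1 * χ y 1 1) +
      cv τ (-x - y) * av τ (y - x) * (χ x 0 0 * χ y 1 1 - χ x 1 1 * χ y 0 0) = 0)
    (hdb : ∀ x y, dv τ (-x - y) * bv τ (y - x) * (χ x 0 0 * χ y 0 0 - χ x 1 1 * χ y 1 1) +
      bv τ (-x - y) * cv τ (y - x) * (χ x 0 0 * χ y 1 1 - χ x 1 1 * χ y 0 0) = 0) :
    BoundaryExchange τ χ := by
  intro x y ψ
  rw [sum_finFourArrow, sum_finFourArrow]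
  simp only [Fin.sum_univ_two, Matrix.cons_val, h01, h10, zero_mul, mul_zero, add_zero, zero_add]
  simp only [applyRc_four_zero, applyRc_four_one, applyRc_four_two, sum_Rcheckent_mul,
    zero_ne_one, one_ne_zero, if_true, if_false, sub_self, sub_zero]
  linear_combination (ψ ![1, 1, 0, 0] - ψ ![0, 0, 1, 1]) * had x y +
    (ψ ![1, 0, 1, 0] - ψ ![0, 1, 0, 1]) * hdb x y

end FourSites

section BoundaryVectors

variable {τ : ℂ}

lemma th1_neg_sub_add (x y c : ℂ) : th1 (-x - y + c) τ = -th1 (x + y - c) τ := by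
  rw [← th1_neg]
  ring_nf

lemma th4_neg_sub_add (x y c : ℂ) : th4 (-x - y + c) τ = th4 (x + y - c) τ := by
  rw [← th4_neg]
  ring_nf

lemma th1_sub_rev (x y : ℂ) : th1 (y - x) τ = -th1 (x - y) τ := by
  rw [← th1_neg, neg_sub]

lemma th4_sub_rev (x y : ℂ) : th4 (y - x) τ = th4 (x - y) τ := by
  rw [← th4_neg, neg_sub]

section Components

variable (lam : ℂ)

lemma chiC_zero_one (hτ : 0 < τ.im) (x : ℂ) : chiC τ lam x 0 1 =
    (th1 (x - ηc) τ * th2 (lam + ηc) τ + th1 (lam + ηc) τ * th2 (x - ηc) τ) / 2 := by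
  rw [← two_mul_th1_mul_th4 _ _ hτ]
  simp only [chiC, and_self, if_true]
  ring_nf

lemma chiC_one_zero (hτ : 0 < τ.im) (x : ℂ) : chiC τ lam x 1 0 =
    (th1 (x - ηc) τ * th2 (lam + ηc) τ - th1 (lam + ηc) τ * th2 (x - ηc) τ) / 2 := by
  rw [← two_mul_th4_mul_th1 _ _ hτ]
  simp only [chiC, one_ne_zero, zero_ne_one, and_self, if_true, if_false]
  ring_nf

lemma chibarC_zero_zero (hτ : 0 < τ.im) (x : ℂ) : chibarC τ lam x 0 0 =
    (th4 (x - ηc) τ * th3 (lam + ηc) τ - th4 (lam + ηc) τ * th3 (x - ηc) τ) / 2 := by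
  rw [← two_mul_th1_mul_th1 _ _ hτ]
  simp only [chibarC, and_self, if_true]
  ring_nf

lemma chibarC_one_one (hτ : 0 < τ.im) (x : ℂ) : chibarC τ lam x 1 1 =
    (th4 (x - ηc) τ * th3 (lam + ηc) τ + th4 (lam + ηc) τ * th3 (x - ηc) τ) / 2 := by
  rw [← two_mul_th4_mul_th4 _ _ hτ]
  simp only [chibarC, one_ne_zero, and_self, if_true, if_false]
  ring_nf

lemma chiC_parallel_sub (hτ : 0 < τ.im) (x y : ℂ) :
    chiC τ lam x 0 1 * chiC τ lam y 0 1 - chiC τ lam x 1 0 * chiC τ lam y 1 0 =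
    th1 (lam + ηc) τ * th2 (lam + ηc) τ *
      (th1 (x + y - 2 * ηc) (2 * τ) * th4 (x - y) (2 * τ)) := by
  have h := two_mul_th1_mul_th4 (x - ηc) (y - ηc) hτ
  rw [sub_sub_sub_cancel_right, sub_add_sub_comm, ← two_mul] at h
  simp only [chiC_zero_one lam hτ, chiC_one_zero lam hτ]
  linear_combination -(th1 (lam + ηc) τ * th2 (lam + ηc) τ / 2) * h

lemma chiC_antiparallel_sub (hτ : 0 < τ.im) (x y : ℂ) :
    chiC τ lam x 0 1 * chiC τ lam y 1 0 - chiC τ lam x 1 0 * chiC τ lam y 0 1 =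
    -(th1 (lam + ηc) τ * th2 (lam + ηc) τ *
      (th4 (x + y - 2 * ηc) (2 * τ) * th1 (x - y) (2 * τ))) := by
  have h := two_mul_th4_mul_th1 (x - ηc) (y - ηc) hτ
  rw [sub_sub_sub_cancel_right, sub_add_sub_comm, ← two_mul] at h
  simp only [chiC_zero_one lam hτ, chiC_one_zero lam hτ]
  linear_combination (th1 (lam + ηc) τ * th2 (lam + ηc) τ / 2) * h

lemma chibarC_parallel_sub (hτ : 0 < τ.im) (x y : ℂ) :
    chibarC τ lam x 0 0 * chibarC τ lam y 0 0 - chibarC τ lam x 1 1 * chibarC τ lam y 1 1 =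
    -(th4 (lam + ηc) τ * th3 (lam + ηc) τ *
      (th4 (x + y - 2 * ηc) (2 * τ) * th4 (x - y) (2 * τ))) := by
  have h := two_mul_th4_mul_th4 (x - ηc) (y - ηc) hτ
  rw [sub_sub_sub_cancel_right, sub_add_sub_comm, ← two_mul] at h
  simp only [chibarC_zero_zero lam hτ, chibarC_one_one lam hτ]
  linear_combination (th4 (lam + ηc) τ * th3 (lam + ηc) τ / 2) * h

lemma chibarC_antiparallel_sub (hτ : 0 < τ.im) (x y : ℂ) :
    chibarC τ lam x 0 0 * chibarC τ lam y 1 1 - chibarC τ lam x 1 1 * chibarC τ lam y 0 0 =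
    th4 (lam + ηc) τ * th3 (lam + ηc) τ *
      (th1 (x + y - 2 * ηc) (2 * τ) * th1 (x - y) (2 * τ)) := by
  have h := two_mul_th1_mul_th1 (x - ηc) (y - ηc) hτ
  rw [sub_sub_sub_cancel_right, sub_add_sub_comm, ← two_mul] at h
  simp only [chibarC_zero_zero lam hτ, chibarC_one_one lam hτ]
  linear_combination -(th4 (lam + ηc) τ * th3 (lam + ηc) τ / 2) * h

end Components

lemma boundaryExchange_chiC (lam : ℂ) (hτ : 0 < τ.im) : BoundaryExchange τ (chiC τ lam) := by
  refine boundaryExchange_of_antidiagonal (fun _ => by simp [chiC]) (fun _ => by simp [chiC])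
    (fun x y => ?_) (fun x y => ?_) <;>
  · rw [chiC_parallel_sub lam hτ, chiC_antiparallel_sub lam hτ]
    simp only [av, bv, cv, dv, th1_neg_sub_add, th4_neg_sub_add, th1_sub_rev x y,
      th4_sub_rev x y]
    ring

lemma boundaryExchange_chibarC (lam : ℂ) (hτ : 0 < τ.im) :
    BoundaryExchange τ (chibarC τ lam) := by
  refine boundaryExchange_of_diagonal (fun _ => by simp [chibarC]) (fun _ => by simp [chibarC])
    (fun x y => ?_) (fun x y => ?_) <;>
  · rw [chibarC_parallel_sub lam hτ, chibarC_antiparallel_sub lam hτ]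
    simp only [av, bv, cv, dv, th1_neg_sub_add, th4_neg_sub_add, th1_sub_rev x y,
      th4_sub_rev x y]
    ring

lemma differentiable_chiC (lam : ℂ) (hτ : 0 < τ.im) (s t : Fin 2) :
    Differentiable ℂ fun x => chiC τ lam x s t := by
  have h1 := differentiable_th1 (two_mul_im_pos hτ)
  have h4 := differentiable_th4 (two_mul_im_pos hτ)
  simp only [chiC]
  split_ifs <;> fun_prop

lemma differentiable_chibarC (lam : ℂ) (hτ : 0 < τ.im) (s t : Fin 2) :
    Differentiable ℂ fun x => chibarC τ lam x s t := by
  have h1 := differentiable_th1 (two_mul_im_pos hτ)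
  have h4 := differentiable_th4 (two_mul_im_pos hτ)
  simp only [chibarC]
  split_ifs <;> fun_prop

lemma differentiable_Rcheckent (hτ : 0 < τ.im) (p q : Fin 2 × Fin 2) :
    Differentiable ℂ fun u => Rcheckent τ u p q := by
  have h1 := differentiable_th1 (two_mul_im_pos hτ)
  have h4 := differentiable_th4 (two_mul_im_pos hτ)
  simp only [Rcheckent, Rent, av, bv, cv, dv]
  split_ifs <;> fun_prop

end BoundaryVectors

section SimpleZero

open Filter Matrix Topology

variable {𝕜 ι : Type*} [NontriviallyNormedField 𝕜] [Fintype ι]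

lemma eq_zero_of_mul_eq_dotProduct_of_deriv_ne_zero {f ρ : 𝕜 → 𝕜} {q δ : 𝕜 → ι → 𝕜} {x : 𝕜}
    (hf : ContinuousAt f x) (hρ : ρ x = 0) (hρ' : deriv ρ x ≠ 0) (hq : DifferentiableAt 𝕜 q x)
    (hδ : ContinuousAt δ x) (hδ0 : δ x = 0) (hqδ : ∀ t, q x ⬝ᵥ δ t = 0)
    (h : ∀ t, ρ t * f t = q t ⬝ᵥ δ t) : f x = 0 := by
  have hslope : ∀ᶠ t in 𝓝[≠] x, dslope ρ x t * f t = dslope q x t ⬝ᵥ δ t := by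
    filter_upwards [self_mem_nhdsWithin] with t ht
    refine mul_left_cancel₀ (sub_ne_zero.mpr ht) ?_
    rw [← mul_assoc, ← smul_eq_mul (t - x), sub_smul_dslope, hρ, sub_zero, h,
      ← smul_eq_mul, ← smul_dotProduct, sub_smul_dslope, sub_dotProduct, hqδ, sub_zero]
  have hleft : ContinuousAt (fun t => dslope ρ x t * f t) x :=
    (continuousAt_dslope_same.mpr (differentiableAt_of_deriv_ne_zero hρ')).mul hf
  have hright : ContinuousAt (fun t => dslope q x t ⬝ᵥ δ t) x :=
    (continuous_fst.dotProduct continuous_snd).continuousAt.comp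
      ((continuousAt_dslope_same.mpr hq).prodMk hδ)
  have hlim := tendsto_nhds_unique_of_eventuallyEq (hleft.tendsto.mono_left nhdsWithin_le_nhds)
    (hright.tendsto.mono_left nhdsWithin_le_nhds) hslope
  rw [dslope_same, hδ0, dotProduct_zero] at hlim
  exact (mul_eq_zero.mp hlim).resolve_left hρ'

lemma differentiableAt_vecMul {κ : Type*} [Finite κ] {v : 𝕜 → ι → 𝕜} {M : 𝕜 → Matrix ι κ 𝕜}
    {x : 𝕜} (hv : ∀ i, DifferentiableAt 𝕜 (fun t => v t i) x)
    (hM : ∀ i j, DifferentiableAt 𝕜 (fun t => M t i j) x) :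
    DifferentiableAt 𝕜 (fun t => v t ᵥ* M t) x := by
  have := Fintype.ofFinite κ
  refine differentiableAt_pi.mpr fun j => ?_
  simp only [vecMul, dotProduct]
  fun_prop

end SimpleZero

/-- Continuity in each variable separately, the other variables being fixed. -/
def SeparatelyContinuous {ι E X : Type*} [DecidableEq ι] [TopologicalSpace E] [TopologicalSpace X]
    (F : (ι → E) → X) : Prop :=
  ∀ u i, Continuous fun z => F (Function.update u i z)

namespace SeparatelyContinuous

variable {E X : Type*} [TopologicalSpace E] [TopologicalSpace X] {F : (Fin 4 → E) → X}

lemma four_zero (h : SeparatelyContinuous F) (b c d : E) : Continuous fun t => F ![t, b, c, d] := by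
  simpa only [update_four_zero] using h ![b, b, c, d] 0

lemma four_one (h : SeparatelyContinuous F) (a c d : E) : Continuous fun t => F ![a, t, c, d] := by
  simpa only [update_four_one] using h ![a, a, c, d] 1

lemma four_two (h : SeparatelyContinuous F) (a b d : E) : Continuous fun t => F ![a, b, t, d] := by
  simpa only [update_four_two] using h ![a, b, b, d] 2

lemma four_three (h : SeparatelyContinuous F) (a b c : E) :
    Continuous fun t => F ![a, b, c, t] := by
  simpa only [update_four_three] using h ![a, b, c, c] 3

end SeparatelyContinuous

/-- The exchange relations (P1) for a single vector-valued function of `L` variables. -/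
def ExchangeRelations (τ : ℂ) {L : ℕ} (φ : (Fin L → ℂ) → (Fin L → Fin 2) → ℂ) : Prop :=
  ∀ (u : Fin L → ℂ) (i j : Fin L), (j : ℕ) = (i : ℕ) + 1 →
    applyRc τ (u j - u i) i j (φ u) =
      fun s => rv τ (u j - u i) * φ (fun l => u (Equiv.swap i j l)) s

section BoundarySymmetry

open Matrix

variable {τ : ℂ}

/-- The matrix of `Ř(u)` acting on the tensor factors `i` and `j`, with respect to the basis of
spin configurations. -/
def Rmat (τ u : ℂ) {L : ℕ} (i j : Fin L) : Matrix (Fin L → Fin 2) (Fin L → Fin 2) ℂ :=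
  of fun α β => ∑ s, ∑ t, Rcheckent τ u (α i, α j) (s, t) *
    (if Function.update (Function.update α i s) j t = β then 1 else 0)

section Matrices

variable {L : ℕ} (i j k l : Fin L)

lemma Rmat_mulVec (u : ℂ) (ψ : (Fin L → Fin 2) → ℂ) :
    Rmat τ u i j *ᵥ ψ = applyRc τ u i j ψ := by
  funext α
  simp only [mulVec, dotProduct, Rmat, of_apply, applyRc, Finset.sum_mul]
  rw [Finset.sum_comm]
  refine Finset.sum_congr rfl fun s _ => ?_
  rw [Finset.sum_comm]
  simp

lemma differentiable_Rmat (hτ : 0 < τ.im) (α β : Fin L → Fin 2) :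
    Differentiable ℂ fun u => Rmat τ u i j α β := by
  have := differentiable_Rcheckent hτ
  simp only [Rmat, of_apply]
  fun_prop

lemma differentiable_Rmat_mul_Rmat (hτ : 0 < τ.im) (y : ℂ) (α β : Fin L → Fin 2) :
    Differentiable ℂ fun t => (Rmat τ (-t - y) i j * Rmat τ (y - t) k l) α β := by
  have h := fun i j => differentiable_Rmat (L := L) i j hτ
  simp only [mul_apply]
  fun_prop

end Matrices

/-- The product covector `χ(x) ⊗ χ(y)`. -/
def tensorCov (χ : ℂ → Fin 2 → Fin 2 → ℂ) (x y : ℂ) (s : Fin 4 → Fin 2) : ℂ :=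
  χ x (s 0) (s 1) * χ y (s 2) (s 3)

variable {φ : (Fin 4 → ℂ) → (Fin 4 → Fin 2) → ℂ} {χ : ℂ → Fin 2 → Fin 2 → ℂ}

lemma ExchangeRelations.zero_one (h : ExchangeRelations τ φ) (a b c d : ℂ) :
    Rmat τ (b - a) 0 1 *ᵥ φ ![a, b, c, d] = rv τ (b - a) • φ ![b, a, c, d] := by
  have hswap : (fun l => ![a, b, c, d] (Equiv.swap 0 1 l)) = ![b, a, c, d] := by
    funext l; fin_cases l <;> rfl
  rw [Rmat_mulVec, ← hswap]
  exact h ![a, b, c, d] 0 1 rfl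

lemma ExchangeRelations.one_two (h : ExchangeRelations τ φ) (a b c d : ℂ) :
    Rmat τ (c - b) 1 2 *ᵥ φ ![a, b, c, d] = rv τ (c - b) • φ ![a, c, b, d] := by
  have hswap : (fun l => ![a, b, c, d] (Equiv.swap 1 2 l)) = ![a, c, b, d] := by
    funext l; fin_cases l <;> rfl
  rw [Rmat_mulVec, ← hswap]
  exact h ![a, b, c, d] 1 2 rfl

lemma ExchangeRelations.two_three (h : ExchangeRelations τ φ) (a b c d : ℂ) :
    Rmat τ (d - c) 2 3 *ᵥ φ ![a, b, c, d] = rv τ (d - c) • φ ![a, b, d, c] := by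
  have hswap : (fun l => ![a, b, c, d] (Equiv.swap 2 3 l)) = ![a, b, d, c] := by
    funext l; fin_cases l <;> rfl
  rw [Rmat_mulVec, ← hswap]
  exact h ![a, b, c, d] 2 3 rfl

lemma ExchangeRelations.left (h : ExchangeRelations τ φ) (x y z : ℂ) :
    (Rmat τ (-x - y) 1 2 * Rmat τ (y - x) 0 1) *ᵥ φ ![x, y, -y, z] =
      (rv τ (-x - y) * rv τ (y - x)) • φ ![y, -y, x, z] := by
  rw [← mulVec_mulVec, h.zero_one, mulVec_smul, show -x - y = -y - x by ring, h.one_two, smul_smul,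
    mul_comm]

lemma ExchangeRelations.right (h : ExchangeRelations τ φ) (x y z : ℂ) :
    (Rmat τ (-x - y) 1 2 * Rmat τ (y - x) 2 3) *ᵥ φ ![z, y, -y, -x] =
      (rv τ (-x - y) * rv τ (y - x)) • φ ![z, -x, y, -y] := by
  rw [← mulVec_mulVec, show y - x = -x - -y by ring, h.two_three, mulVec_smul, h.one_two, smul_smul,
    mul_comm]

lemma BoundaryExchange.vecMul_eq (hχ : BoundaryExchange τ χ) (x y : ℂ) :
    tensorCov χ y x ᵥ* (Rmat τ (-x - y) 1 2 * Rmat τ (y - x) 0 1) =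
      tensorCov χ x y ᵥ* (Rmat τ (-x - y) 1 2 * Rmat τ (y - x) 2 3) := by
  refine dotProduct_eq _ _ fun ψ => ?_
  rw [← dotProduct_mulVec, ← dotProduct_mulVec, ← mulVec_mulVec, ← mulVec_mulVec]
  simp only [Rmat_mulVec]
  exact hχ x y ψ

lemma BoundaryExchange.rv_mul_dotProduct_sub (hχ : BoundaryExchange τ χ)
    (hφ : ExchangeRelations τ φ) (x y z w : ℂ) :
    rv τ (-x - y) * (rv τ (y - x) *
        (tensorCov χ y x ⬝ᵥ φ ![y, -y, x, z] - tensorCov χ x y ⬝ᵥ φ ![w, -x, y, -y])) =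
      tensorCov χ x y ᵥ* (Rmat τ (-x - y) 1 2 * Rmat τ (y - x) 2 3) ⬝ᵥ
        (φ ![x, y, -y, z] - φ ![w, y, -y, -x]) := by
  rw [dotProduct_sub, ← dotProduct_mulVec _ _ (φ ![w, y, -y, -x]), hφ.right, ← hχ.vecMul_eq,
    ← dotProduct_mulVec, hφ.left, dotProduct_smul, dotProduct_smul, smul_eq_mul, smul_eq_mul]
  ring

lemma tensorCov_dotProduct_of_rv_eq_zero (hτ : 0 < τ.im) (hχ : BoundaryExchange τ χ)
    (hχd : ∀ s t, Differentiable ℂ fun x => χ x s t) (hφ : ExchangeRelations τ φ)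
    (hφc : SeparatelyContinuous φ) {x y : ℂ} (hr : rv τ (y - x) ≠ 0) (hr0 : rv τ (-x - y) = 0) :
    tensorCov χ y x ⬝ᵥ φ ![y, -y, x, -x] = tensorCov χ x y ⬝ᵥ φ ![x, -x, y, -y] := by
  have hχc (s t : Fin 2) := (hχd s t).continuous
  have hA : Continuous fun t => tensorCov χ y t ⬝ᵥ φ ![y, -y, t, -x] :=
    (continuous_pi fun s => (hχc _ _).const_mul _).dotProduct (hφc.four_two _ _ _)
  have hB : Continuous fun t => tensorCov χ t y ⬝ᵥ φ ![x, -t, y, -y] :=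
    (continuous_pi fun s => (hχc _ _).mul_const _).dotProduct
      ((hφc.four_one _ _ _).comp continuous_neg)
  have hf : Continuous fun t => rv τ (y - t) * (tensorCov χ y t ⬝ᵥ φ ![y, -y, t, -x] -
      tensorCov χ t y ⬝ᵥ φ ![x, -t, y, -y]) :=
    ((differentiable_rv hτ).continuous.comp (continuous_const.sub continuous_id)).mul (hA.sub hB)
  have hδ : Continuous fun t => φ ![t, y, -y, -x] - φ ![x, y, -y, -t] :=
    (hφc.four_zero _ _ _).sub ((hφc.four_three _ _ _).comp continuous_neg)
  have hq : DifferentiableAt ℂ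
      (fun t => tensorCov χ t y ᵥ* (Rmat τ (-t - y) 1 2 * Rmat τ (y - t) 2 3)) x :=
    differentiableAt_vecMul (fun s => (hχd _ _).mul_const _ x)
      fun s t => differentiable_Rmat_mul_Rmat 1 2 2 3 hτ y s t x
  have hρ' : deriv (fun t => rv τ (-t - y)) x ≠ 0 := by
    rw [deriv_comp_neg (fun t => rv τ (t - y)), deriv_comp_sub_const]
    exact neg_ne_zero.mpr (deriv_rv_ne_zero hτ hr0)
  have hann (t : ℂ) : tensorCov χ x y ᵥ* (Rmat τ (-x - y) 1 2 * Rmat τ (y - x) 2 3) ⬝ᵥ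
      (φ ![t, y, -y, -x] - φ ![x, y, -y, -t]) = 0 := by
    rw [dotProduct_sub, ← dotProduct_mulVec, hφ.right, ← hχ.vecMul_eq, ← dotProduct_mulVec,
      hφ.left, hr0, zero_mul, zero_smul, zero_smul, dotProduct_zero, dotProduct_zero, sub_zero]
  have hlim := eq_zero_of_mul_eq_dotProduct_of_deriv_ne_zero (ρ := fun t => rv τ (-t - y))
    hf.continuousAt hr0 hρ' hq hδ.continuousAt (sub_self _) hann fun t =>
      hχ.rv_mul_dotProduct_sub hφ t y (-x) x
  exact sub_eq_zero.mp ((mul_eq_zero.mp hlim).resolve_left hr)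

lemma tensorCov_dotProduct_of_rv_ne_zero (hτ : 0 < τ.im) (hχ : BoundaryExchange τ χ)
    (hχd : ∀ s t, Differentiable ℂ fun x => χ x s t) (hφ : ExchangeRelations τ φ)
    (hφc : SeparatelyContinuous φ) {x y : ℂ} (hr : rv τ (y - x) ≠ 0) :
    tensorCov χ y x ⬝ᵥ φ ![y, -y, x, -x] = tensorCov χ x y ⬝ᵥ φ ![x, -x, y, -y] := by
  by_cases hr0 : rv τ (-x - y) = 0
  · exact tensorCov_dotProduct_of_rv_eq_zero hτ hχ hχd hφ hφc hr hr0
  · have h := hχ.rv_mul_dotProduct_sub hφ x y (-x) x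
    rw [sub_self, dotProduct_zero, ← mul_assoc] at h
    exact sub_eq_zero.mp ((mul_eq_zero.mp h).resolve_left (mul_ne_zero hr0 hr))

lemma tensorCov_dotProduct_comm (hτ : 0 < τ.im) (hχ : BoundaryExchange τ χ)
    (hχd : ∀ s t, Differentiable ℂ fun x => χ x s t) (hφ : ExchangeRelations τ φ)
    (hφc : SeparatelyContinuous φ) (x y : ℂ) :
    tensorCov χ y x ⬝ᵥ φ ![y, -y, x, -x] = tensorCov χ x y ⬝ᵥ φ ![x, -x, y, -y] := by
  by_cases hr : rv τ (y - x) = 0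
  · have hr' := rv_neg_ne_zero_of_rv_eq_zero hτ hr
    rw [neg_sub] at hr'
    exact (tensorCov_dotProduct_of_rv_ne_zero hτ hχ hχd hφ hφc hr').symm
  · exact tensorCov_dotProduct_of_rv_ne_zero hτ hχ hχd hφ hφc hr

end BoundarySymmetry

section Extend

variable {ι κ X : Type*} {e : κ → ι}

lemma extend_extend_comp (he : e.Injective) (s : κ → X) (α : ι → X) :
    Function.extend e (α ∘ e) (Function.extend e s α) = α := by
  funext l
  by_cases h : ∃ i, e i = l
  · obtain ⟨i, rfl⟩ := h
    exact he.extend_apply _ _ i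
  · rw [Function.extend_apply' _ _ _ h, Function.extend_apply' _ _ _ h]

lemma update_extend [DecidableEq ι] [DecidableEq κ] (he : e.Injective) (s : κ → X) (α : ι → X)
    (i : κ) (a : X) :
    Function.update (Function.extend e s α) (e i) a =
      Function.extend e (Function.update s i a) α := by
  funext l
  by_cases h : ∃ j, e j = l
  · obtain ⟨j, rfl⟩ := h
    simp [he.extend_apply, Function.update_apply, he.eq_iff]
  · have hl : l ≠ e i := fun h' => h ⟨i, h'.symm⟩
    rw [Function.update_of_ne hl, Function.extend_apply' _ _ _ h, Function.extend_apply' _ _ _ h]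

lemma extend_swap [DecidableEq ι] [DecidableEq κ] (he : e.Injective) (s : κ → X) (α : ι → X)
    (i j : κ) :
    (fun l => Function.extend e s α (Equiv.swap (e i) (e j) l)) =
      Function.extend e (fun l => s (Equiv.swap i j l)) α := by
  funext l
  by_cases h : ∃ m, e m = l
  · obtain ⟨m, rfl⟩ := h
    rw [he.swap_apply, he.extend_apply, he.extend_apply]
  · have h' (m : κ) : l ≠ e m := fun h' => h ⟨m, h'.symm⟩
    rw [Equiv.swap_apply_of_ne_of_ne (h' i) (h' j), Function.extend_apply' _ _ _ h,
      Function.extend_apply' _ _ _ h]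

section Sums

variable [Fintype ι] [Fintype κ] [DecidableEq ι] [DecidableEq κ] [Fintype X]
  {M : Type*} [AddCommMonoid M]

lemma sum_sum_extend (he : e.Injective) (g : (ι → X) → M) :
    ∑ α, ∑ s, g (Function.extend e s α) = Fintype.card (κ → X) • ∑ α, g α := by
  let E : (ι → X) × (κ → X) → (ι → X) × (κ → X) := fun p => (Function.extend e p.2 p.1, p.1 ∘ e)
  have hE : Function.Involutive E := fun p =>
    Prod.ext (extend_extend_comp he p.2 p.1) (funext fun i => he.extend_apply _ _ i)
  calc ∑ α, ∑ s, g (Function.extend e s α)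
      = ∑ p : (ι → X) × (κ → X), g (Function.extend e p.2 p.1) :=
        (Fintype.sum_prod_type' fun α s => g (Function.extend e s α)).symm
    _ = ∑ p : (ι → X) × (κ → X), g p.1 :=
        Fintype.sum_equiv (hE.toPerm E) _ _ fun _ => rfl
    _ = Fintype.card (κ → X) • ∑ α, g α := by
        simp only [Fintype.sum_prod_type, Finset.sum_const, Finset.card_univ, Finset.smul_sum]

lemma sum_eq_of_sum_extend_eq [Nonempty X] [IsAddTorsionFree M] (he : e.Injective)
    {g g' : (ι → X) → M}
    (h : ∀ α, ∑ s, g (Function.extend e s α) = ∑ s, g' (Function.extend e s α)) :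
    ∑ α, g α = ∑ α, g' α := by
  refine nsmul_right_injective (Fintype.card_ne_zero (α := κ → X)) ?_
  simp only [← sum_sum_extend he]
  exact Finset.sum_congr rfl fun α _ => h α

end Sums

lemma SeparatelyContinuous.comp_extend {E Y : Type*} [DecidableEq ι] [DecidableEq κ]
    [TopologicalSpace E] [TopologicalSpace Y] {F : (ι → E) → Y} (h : SeparatelyContinuous F)
    (he : e.Injective) (U : ι → E) : SeparatelyContinuous fun u => F (Function.extend e u U) := by
  intro u i
  simpa only [update_extend he] using h (Function.extend e u U) (e i)

lemma ExchangeRelations.comp_extend {τ : ℂ} {K L : ℕ} {Φ : (Fin L → ℂ) → (Fin L → Fin 2) → ℂ}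
    (h : ExchangeRelations τ Φ) {e : Fin K → Fin L} (he : e.Injective)
    (hsucc : ∀ i j : Fin K, (j : ℕ) = i + 1 → (e j : ℕ) = e i + 1)
    (U : Fin L → ℂ) (α : Fin L → Fin 2) :
    ExchangeRelations τ fun u s => Φ (Function.extend e u U) (Function.extend e s α) := by
  intro u i j hij
  funext s
  have hext := congrFun (h (Function.extend e u U) (e i) (e j) (hsucc i j hij))
    (Function.extend e s α)
  rw [extend_swap he] at hext
  simpa only [applyRc, update_extend he, he.extend_apply] using hext

end Extend

section BoundaryCovector

open Matrix

/-- The sites `2k`, `2k+1`, `2k+2`, `2k+3`, which carry `χ(x_k) ⊗ χ(x_{k+1})`. -/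
def blockSite {n k : ℕ} (hk : k + 1 < n) (i : Fin 4) : Fin (2 * n + 1) :=
  ⟨2 * k + i, by have := i.2; omega⟩

/-- The covector `χ(x₁) ⊗ ⋯ ⊗ χ(xₙ) ⊗ b`. Its pairing with `Ψ n (interleave x)` specialises to
`Zfun` and `Zbarfun`. -/
def boundaryCov (χ : ℂ → Fin 2 → Fin 2 → ℂ) (b : Fin 2 → ℂ) {n : ℕ} (x : Fin n → ℂ)
    (α : Fin (2 * n + 1) → Fin 2) : ℂ :=
  (∏ m : Fin n, χ (x m)
      (α ⟨2 * (m : ℕ), by have := m.2; omega⟩) (α ⟨2 * (m : ℕ) + 1, by have := m.2; omega⟩))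
    * b (α ⟨2 * n, by omega⟩)

/-- The factors of `boundaryCov χ b x` outside the block `blockSite hk`. -/
def outerCov (χ : ℂ → Fin 2 → Fin 2 → ℂ) (b : Fin 2 → ℂ) {n k : ℕ} (hk : k + 1 < n)
    (x : Fin n → ℂ) (α : Fin (2 * n + 1) → Fin 2) : ℂ :=
  (∏ m ∈ (Finset.univ.erase (⟨k, by omega⟩ : Fin n)).erase ⟨k + 1, hk⟩, χ (x m)
      (α ⟨2 * (m : ℕ), by have := m.2; omega⟩) (α ⟨2 * (m : ℕ) + 1, by have := m.2; omega⟩))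
    * b (α ⟨2 * n, by omega⟩)

section Block

variable {n k : ℕ} (hk : k + 1 < n)

lemma blockSite_injective : (blockSite hk).Injective := fun i j h => by
  simp only [blockSite, Fin.mk.injEq] at h
  exact Fin.ext (by omega)

lemma extend_blockSite_of_notMem {X : Type*} (s : Fin 4 → X) (α : Fin (2 * n + 1) → X)
    {l : Fin (2 * n + 1)} (hl : (l : ℕ) < 2 * k ∨ 2 * k + 4 ≤ l) :
    Function.extend (blockSite hk) s α l = α l := by
  refine Function.extend_apply' _ _ _ ?_
  rintro ⟨i, rfl⟩
  simp only [blockSite] at hl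
  omega

lemma interleave_blockSite (x : Fin n → ℂ) (i : Fin 4) :
    interleave x (blockSite hk i) =
      ![x ⟨k, by omega⟩, -x ⟨k, by omega⟩, x ⟨k + 1, hk⟩, -x ⟨k + 1, hk⟩] i := by
  have h1 : (2 * k + 1) / 2 = k := by omega
  have h2 : (2 * k + 2) / 2 = k + 1 := by omega
  have h3 : (2 * k + 3) / 2 = k + 1 := by omega
  fin_cases i
  · simp [interleave, blockSite, show k < n by omega]
  · simp [interleave, blockSite, show 2 * k + 1 < 2 * n by omega, Nat.add_mod, h1]
  · simp [interleave, blockSite, show 2 * k + 2 < 2 * n by omega, h2]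
  · simp [interleave, blockSite, show 2 * k + 3 < 2 * n by omega, Nat.add_mod, h3]

lemma interleave_eq_extend (x x' : Fin n → ℂ)
    (hx : ∀ m : Fin n, (m : ℕ) ≠ k → (m : ℕ) ≠ k + 1 → x' m = x m) :
    interleave x' = Function.extend (blockSite hk)
      ![x' ⟨k, by omega⟩, -x' ⟨k, by omega⟩, x' ⟨k + 1, hk⟩, -x' ⟨k + 1, hk⟩] (interleave x) := by
  funext l
  by_cases hl : (l : ℕ) < 2 * k ∨ 2 * k + 4 ≤ l
  · rw [extend_blockSite_of_notMem hk _ _ hl]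
    unfold interleave
    split_ifs
    · exact hx _ (by simp only; omega) (by simp only; omega)
    · rw [hx _ (by simp only; omega) (by simp only; omega)]
    · rfl
  · obtain ⟨i, rfl⟩ : ∃ i, blockSite hk i = l :=
      ⟨⟨l - 2 * k, by omega⟩, Fin.ext (by simp only [blockSite]; omega)⟩
    rw [(blockSite_injective hk).extend_apply, interleave_blockSite]

lemma boundaryCov_extend (χ : ℂ → Fin 2 → Fin 2 → ℂ) (b : Fin 2 → ℂ) (x x' : Fin n → ℂ)
    (hx : ∀ m : Fin n, (m : ℕ) ≠ k → (m : ℕ) ≠ k + 1 → x' m = x m)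
    (α : Fin (2 * n + 1) → Fin 2) (s : Fin 4 → Fin 2) :
    boundaryCov χ b x' (Function.extend (blockSite hk) s α) =
      outerCov χ b hk x α * tensorCov χ (x' ⟨k, by omega⟩) (x' ⟨k + 1, hk⟩) s := by
  have he := (blockSite_injective hk).extend_apply s α
  rw [boundaryCov, outerCov, ← Finset.mul_prod_erase _ _ (Finset.mem_univ (⟨k, by omega⟩ : Fin n)),
    ← Finset.mul_prod_erase _ _ (a := (⟨k + 1, hk⟩ : Fin n)) (by simp), ← mul_assoc,
    mul_assoc, mul_comm]
  congr 1
  · congr 1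
    · refine Finset.prod_congr rfl fun m hm => ?_
      simp only [Finset.mem_erase, Finset.mem_univ, ne_eq, Fin.ext_iff, and_true] at hm
      rw [hx m hm.2 hm.1, extend_blockSite_of_notMem hk _ _ (by simp only; omega),
        extend_blockSite_of_notMem hk _ _ (by simp only; omega)]
    · rw [extend_blockSite_of_notMem hk s α (Or.inr (by simp only; omega))]
  · rw [tensorCov, ← he 0, ← he 1, ← he 2, ← he 3]
    rfl

end Block

variable {τ : ℂ} {χ : ℂ → Fin 2 → Fin 2 → ℂ} {n : ℕ}
  {Φ : (Fin (2 * n + 1) → ℂ) → (Fin (2 * n + 1) → Fin 2) → ℂ}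

lemma sum_boundaryCov_extend_mul {k : ℕ} (hk : k + 1 < n) (b : Fin 2 → ℂ) (x x' : Fin n → ℂ)
    (hx : ∀ m : Fin n, (m : ℕ) ≠ k → (m : ℕ) ≠ k + 1 → x' m = x m) (α : Fin (2 * n + 1) → Fin 2) :
    ∑ s, boundaryCov χ b x' (Function.extend (blockSite hk) s α) *
        Φ (interleave x') (Function.extend (blockSite hk) s α) =
      outerCov χ b hk x α *
        (tensorCov χ (x' ⟨k, by omega⟩) (x' ⟨k + 1, hk⟩) ⬝ᵥ fun s =>
          Φ (Function.extend (blockSite hk)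
            ![x' ⟨k, by omega⟩, -x' ⟨k, by omega⟩, x' ⟨k + 1, hk⟩, -x' ⟨k + 1, hk⟩]
            (interleave x)) (Function.extend (blockSite hk) s α)) := by
  rw [interleave_eq_extend hk x x' hx]
  simp only [boundaryCov_extend hk χ b x x' hx, mul_assoc, dotProduct, Finset.mul_sum]

lemma boundaryCov_dotProduct_adjacent_swap (hτ : 0 < τ.im) (hχ : BoundaryExchange τ χ)
    (hχd : ∀ s t, Differentiable ℂ fun x => χ x s t) (b : Fin 2 → ℂ)
    (hΦ : ExchangeRelations τ Φ) (hΦc : SeparatelyContinuous Φ) {k : ℕ} (hk : k + 1 < n)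
    (x : Fin n → ℂ) :
    let x' : Fin n → ℂ := fun i => x (Equiv.swap ⟨k, by omega⟩ ⟨k + 1, hk⟩ i)
    boundaryCov χ b x' ⬝ᵥ Φ (interleave x') = boundaryCov χ b x ⬝ᵥ Φ (interleave x) := by
  intro x'
  have he := blockSite_injective hk
  have hx (m : Fin n) (h1 : (m : ℕ) ≠ k) (h2 : (m : ℕ) ≠ k + 1) : x' m = x m := by
    simp only [x']
    rw [Equiv.swap_apply_of_ne_of_ne] <;> simpa [Fin.ext_iff]
  refine sum_eq_of_sum_extend_eq he fun α => ?_
  have hblock := tensorCov_dotProduct_comm hτ hχ hχd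
    (hΦ.comp_extend he (fun i j hij => by simp only [blockSite]; omega) (interleave x) α)
    (fun u i => continuous_pi fun s =>
      (continuous_apply (Function.extend (blockSite hk) s α)).comp
        (hΦc.comp_extend he (interleave x) u i))
    (x ⟨k, by omega⟩) (x ⟨k + 1, hk⟩)
  rw [sum_boundaryCov_extend_mul hk b x x' hx,
    sum_boundaryCov_extend_mul hk b x x fun _ _ _ => rfl]
  simp only [x', Equiv.swap_apply_left, Equiv.swap_apply_right]
  rw [hblock]

lemma boundaryCov_dotProduct_perm (hτ : 0 < τ.im) (hχ : BoundaryExchange τ χ)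
    (hχd : ∀ s t, Differentiable ℂ fun x => χ x s t) (b : Fin 2 → ℂ)
    (hΦ : ExchangeRelations τ Φ) (hΦc : SeparatelyContinuous Φ) (σ : Equiv.Perm (Fin n))
    (x : Fin n → ℂ) :
    boundaryCov χ b (fun i => x (σ i)) ⬝ᵥ Φ (interleave fun i => x (σ i)) =
      boundaryCov χ b x ⬝ᵥ Φ (interleave x) := by
  cases n with
  | zero => rw [Subsingleton.elim (fun i => x (σ i)) x]
  | succ n =>
    have hσ : σ ∈ Submonoid.closure
        (Set.range fun i : Fin n => Equiv.swap i.castSucc i.succ) := by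
      rw [Equiv.Perm.mclosure_swap_castSucc_succ]
      trivial
    induction hσ using Submonoid.closure_induction generalizing x with
    | mem σ h =>
      obtain ⟨i, rfl⟩ := h
      exact boundaryCov_dotProduct_adjacent_swap hτ hχ hχd b hΦ hΦc (k := i) (by omega) x
    | one => rfl
    | mul σ ρ _ _ hσ hρ => exact (hρ fun i => x (σ i)).trans (hσ x)

end BoundaryCovector

theorem stmt9_general (τ lam : ℂ) (hτ : 0 < τ.im) (Ψ : PsiFam) (n : ℕ)
    (hcont : SeparatelyContinuous (Ψ n)) (h1 : ExchangeRelations τ (Ψ n)) (x : Fin n → ℂ)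
    (σ : Equiv.Perm (Fin n)) :
    Zfun τ lam Ψ n (fun i => x (σ i)) = Zfun τ lam Ψ n x ∧
    ∀ ε, Zbarfun τ lam ε Ψ n (fun i => x (σ i)) = Zbarfun τ lam ε Ψ n x :=
  ⟨boundaryCov_dotProduct_perm hτ (boundaryExchange_chiC lam hτ) (differentiable_chiC lam hτ)
      (fun s => if s = 0 then 1 else 0) h1 hcont σ x,
    fun ε => boundaryCov_dotProduct_perm hτ (boundaryExchange_chibarC lam hτ)
      (differentiable_chibarC lam hτ) (fun s => if s = 0 then 1 else ε) h1 hcont σ x⟩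

theorem stmt9 (τ lam : ℂ) (hτ : 0 < τ.im) (Ψ : PsiFam)
    (hent : PsiEntire Ψ) (h1 : PsiP1 τ Ψ)
    (n : ℕ) (hn : 2 ≤ n) (x : Fin n → ℂ) (σ : Equiv.Perm (Fin n)) :
    Zfun τ lam Ψ n (fun i => x (σ i)) = Zfun τ lam Ψ n x ∧
    Zbarfun τ lam 1 Ψ n (fun i => x (σ i)) = Zbarfun τ lam 1 Ψ n x ∧
    Zbarfun τ lam (-1) Ψ n (fun i => x (σ i)) = Zbarfun τ lam (-1) Ψ n x :=
  have h := stmt9_general τ lam hτ Ψ n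
    (fun u i => continuous_pi fun α => (hent n u i α).continuous) (h1 n) x σ
  ⟨h.1, h.2 1, h.2 (-1)⟩

end
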